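/- Let n ≥ 3 be an integer and let G be the grid P_n □ P_3. Then the strong convexity spectrum of G equals S_SC(G) = {k ∈ ℤ : 1 ≤ k ≤ 3n−3} \ {2, 3, 5, 7}. -/

import Mathlib

/-!  Common definitions: oriented graphs, geodesic convexity, convexity number,
strong convexity spectrum, and grid graphs. -/

variable {V : Type*}

/-- A directed walk of length `k` from `u` to `v` along the arc relation `A`,
encoded by the function `f` listing its vertices. -/
def IsDirWalk (A : V → V → Prop) (k : ℕ) (f : ℕ → V) (u v : V) : Prop :=
  f 0 = u ∧ f k = v ∧ ∀ i, i < k → A (f i) (f (i + 1))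

/-- There is a directed walk from `u` to `v`. -/
def DirReachable (A : V → V → Prop) (u v : V) : Prop :=
  ∃ k f, IsDirWalk A k f u v

/-- A digraph (given by its arc relation) is strongly connected. -/
def StrongConnected (A : V → V → Prop) : Prop :=
  ∀ u v : V, DirReachable A u v

/-- A `uv`-geodesic: a directed walk from `u` to `v` of minimum possible length
(such a walk is automatically a directed path). -/
def IsGeodesic (A : V → V → Prop) (k : ℕ) (f : ℕ → V) (u v : V) : Prop :=
  IsDirWalk A k f u v ∧ ∀ k' f', IsDirWalk A k' f' u v → k ≤ k'

/-- A nonempty vertex set `C` is convex if every vertex lying on a geodesic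
between two vertices of `C` (in either direction) belongs to `C`. -/
def DConvex (A : V → V → Prop) (C : Set V) : Prop :=
  C.Nonempty ∧ ∀ u ∈ C, ∀ v ∈ C, ∀ k f, IsGeodesic A k f u v → ∀ i ≤ k, f i ∈ C

/-- `A` is an orientation of the simple graph `G`: every arc is along an edge,
every edge gets an arc, and no edge gets both directions. -/
def IsOrientation (G : SimpleGraph V) (A : V → V → Prop) : Prop :=
  (∀ x y, A x y → G.Adj x y) ∧ (∀ x y, G.Adj x y → A x y ∨ A y x) ∧
    (∀ x y, A x y → ¬ A y x)

/-- The convexity number of a digraph: the maximum cardinality of a proper convex set. -/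
noncomputable def convexityNumber [Fintype V] (A : V → V → Prop) : ℕ :=
  sSup {k | ∃ C : Set V, DConvex A C ∧ C ≠ Set.univ ∧ C.ncard = k}

/-- The strong convexity spectrum of a graph: the set of convexity numbers of
its strongly connected orientations. -/
def strongConvexitySpectrum [Fintype V] (G : SimpleGraph V) : Set ℕ :=
  {k | ∃ A : V → V → Prop, IsOrientation G A ∧ StrongConnected A ∧ convexityNumber A = k}

/-- The grid graph `P_n □ P_m`. -/
def gridGraph (n m : ℕ) : SimpleGraph (Fin n × Fin m) :=
  (SimpleGraph.pathGraph n).boxProd (SimpleGraph.pathGraph m)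

section Walks

variable {A : V → V → Prop}

theorem IsDirWalk.refl (u : V) : IsDirWalk A 0 (fun _ => u) u u :=
  ⟨rfl, rfl, fun i hi => absurd hi (Nat.not_lt_zero i)⟩

theorem IsDirWalk.append {k l : ℕ} {f g : ℕ → V} {u v w : V}
    (hf : IsDirWalk A k f u v) (hg : IsDirWalk A l g v w) :
    IsDirWalk A (k + l) (fun i => if i ≤ k then f i else g (i - k)) u w := by
  obtain ⟨f0, fk, fs⟩ := hf
  obtain ⟨g0, gl, gs⟩ := hg
  refine ⟨by simp [f0], ?_, ?_⟩
  · by_cases hl : l = 0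
    · subst hl
      simp only [Nat.add_zero, le_refl, if_true]
      rw [fk, ← gl, g0]
    · have : ¬ (k + l ≤ k) := by omega
      simp only [this, if_false]
      rw [show k + l - k = l by omega, gl]
  · intro i hi
    by_cases h1 : i + 1 ≤ k
    · have h2 : i ≤ k := by omega
      simp only [h1, h2, if_true]
      exact fs i (by omega)
    · by_cases h2 : i ≤ k
      · have h3 : i = k := by omega
        subst h3
        simp only [h1, le_refl, if_true, if_false]
        rw [show i + 1 - i = 0 + 1 by omega, fk, ← g0]
        exact gs 0 (by omega)
      · simp only [h1, h2, if_false]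
        rw [show i + 1 - k = (i - k) + 1 by omega]
        exact gs _ (by omega)

theorem IsDirWalk.sub {k : ℕ} {f : ℕ → V} {u v : V} (hf : IsDirWalk A k f u v) {i j : ℕ}
    (hij : i ≤ j) (hj : j ≤ k) : IsDirWalk A (j - i) (fun t => f (i + t)) (f i) (f j) := by
  refine ⟨by simp, ?_, ?_⟩
  · simp only []
    rw [show i + (j - i) = j by omega]
  · intro t ht
    exact hf.2.2 (i + t) (by omega)

theorem IsGeodesic.sub {k : ℕ} {f : ℕ → V} {u v : V} (hf : IsGeodesic A k f u v) {i j : ℕ}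
    (hij : i ≤ j) (hj : j ≤ k) :
    IsGeodesic A (j - i) (fun t => f (i + t)) (f i) (f j) := by
  refine ⟨hf.1.sub hij hj, ?_⟩
  intro k' g hg
  have h1 := hf.1.sub (Nat.zero_le i) (hij.trans hj)
  have h2 := hf.1.sub hj le_rfl
  rw [hf.1.1] at h1
  rw [hf.1.2.1] at h2
  have := hf.2 _ _ ((h1.append hg).append h2)
  omega

theorem DirReachable.trans {u v w : V} (h1 : DirReachable A u v) (h2 : DirReachable A v w) :
    DirReachable A u w := by
  obtain ⟨k, f, hf⟩ := h1
  obtain ⟨l, g, hg⟩ := h2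
  exact ⟨_, _, hf.append hg⟩

theorem IsDirWalk.single {u v : V} (h : A u v) :
    IsDirWalk A 1 (fun i => if i = 0 then u else v) u v := by
  refine ⟨by simp, by simp, ?_⟩
  intro i hi
  have : i = 0 := by omega
  subst this
  simpa using h

theorem DirReachable.single {u v : V} (h : A u v) : DirReachable A u v :=
  ⟨_, _, IsDirWalk.single h⟩

theorem DirReachable.exists_geodesic {u v : V} (h : DirReachable A u v) :
    ∃ k f, IsGeodesic A k f u v := by
  classical
  have hk : ∃ k, ∃ f, IsDirWalk A k f u v := h
  obtain ⟨f, hf⟩ := Nat.find_spec hk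
  exact ⟨Nat.find hk, f, hf, fun k' f' h' => Nat.find_min' hk ⟨f', h'⟩⟩

/-- parity of walks in a two-coloured digraph -/
theorem IsDirWalk.parity {col : V → Bool} (hcol : ∀ x y, A x y → col y = !col x)
    {k : ℕ} {f : ℕ → V} {u v : V} (hf : IsDirWalk A k f u v) :
    col v = (if k % 2 = 0 then col u else !col u) := by
  obtain ⟨f0, fk, fs⟩ := hf
  subst f0 fk
  have : ∀ j, j ≤ k → col (f j) = (if j % 2 = 0 then col (f 0) else !col (f 0)) := by
    intro j
    induction j with
    | zero => simp
    | succ j ih =>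
      intro hj
      rw [hcol _ _ (fs j (by omega)), ih (by omega)]
      rcases Nat.mod_two_eq_zero_or_one j with h | h
      · have : (j + 1) % 2 = 1 := by omega
        simp [h, this]
      · have : (j + 1) % 2 = 0 := by omega
        simp [h, this]
  exact this k le_rfl

theorem DConvex.two {col : V → Bool} (hcol : ∀ x y, A x y → col y = !col x)
    {C : Set V} (hC : DConvex A C) {u v w : V} (huv : A u v) (hvw : A v w) (hne : u ≠ w)
    (hu : u ∈ C) (hw : w ∈ C) : v ∈ C := by
  have hW := (IsDirWalk.single huv).append (IsDirWalk.single hvw)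
  have := hC.2 u hu w hw _ _ ⟨hW, ?_⟩ 1 (by omega)
  · simpa using this
  · intro k' f' hf'
    have e1 := hf'.parity hcol
    have e2 := hW.parity hcol
    rcases k' with _ | _ | k'
    · exact absurd (hf'.1.symm.trans hf'.2.1) hne
    · simp at e1 e2
      rw [e2] at e1
      simp at e1
    · omega

theorem DConvex.three {col : V → Bool} (hcol : ∀ x y, A x y → col y = !col x)
    {C : Set V} (hC : DConvex A C) {u v x w : V} (huv : A u v) (hvx : A v x) (hxw : A x w)
    (hna : ¬ A u w) (hu : u ∈ C) (hw : w ∈ C) : v ∈ C ∧ x ∈ C := by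
  have hW := ((IsDirWalk.single huv).append (IsDirWalk.single hvx)).append (IsDirWalk.single hxw)
  have key := hC.2 u hu w hw _ _ ⟨hW, ?_⟩
  · have h1 := key 1 (by omega)
    have h2 := key 2 (by omega)
    exact ⟨by simpa using h1, by simpa using h2⟩
  · intro k' f' hf'
    have e1 := hf'.parity hcol
    have e2 := hW.parity hcol
    rcases k' with _ | _ | _ | k'
    · simp at e1 e2
      rw [e2] at e1
      simp at e1
    · exfalso
      apply hna
      have := hf'.2.2 0 (by omega)
      rwa [hf'.1, hf'.2.1] at this
    · simp at e1 e2
      rw [e2] at e1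
      simp at e1
    · omega

/-- A convex set containing an arc of a directed 4-cycle contains the cycle. -/
theorem DConvex.cyc {col : V → Bool} (hcol : ∀ x y, A x y → col y = !col x)
    (hasym : ∀ x y, A x y → ¬ A y x)
    {C : Set V} (hC : DConvex A C) {p q r s : V} (hpq : A p q) (hqr : A q r) (hrs : A r s)
    (hsp : A s p) (hp : p ∈ C) (hq : q ∈ C) : r ∈ C ∧ s ∈ C :=
  hC.three hcol hqr hrs hsp (hasym _ _ hpq) hq hp

/-- Along a walk from `P` to not `P` there is a crossing arc. -/
theorem exists_cross {k : ℕ} {f : ℕ → V} {P : V → Prop} (h0 : P (f 0)) (hk : ¬ P (f k)) :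
    ∃ i, i < k ∧ P (f i) ∧ ¬ P (f (i + 1)) := by
  by_contra hcon
  push Not at hcon
  have : ∀ j, j ≤ k → P (f j) := by
    intro j
    induction j with
    | zero => intro _; exact h0
    | succ j ih => intro hj; exact hcon j (by omega) (ih (by omega))
  exact hk (this k le_rfl)

/-- Cut property of convex sets in strong digraphs. -/
theorem DConvex.cut (hs : StrongConnected A) {C : Set V} (hC : DConvex A C) (P : V → Prop)
    {u w : V} (hu : u ∈ C) (hw : w ∈ C) (hPu : P u) (hPw : ¬ P w) :
    ∃ x y, A x y ∧ x ∈ C ∧ y ∈ C ∧ P x ∧ ¬ P y := by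
  obtain ⟨k, f, hf⟩ := (hs u w).exists_geodesic
  have hmem := hC.2 u hu w hw k f hf
  obtain ⟨i, hi, h1, h2⟩ := exists_cross (k := k) (f := f) (P := P)
    (by rw [hf.1.1]; exact hPu) (by rw [hf.1.2.1]; exact hPw)
  exact ⟨f i, f (i + 1), hf.1.2.2 i hi, hmem i hi.le, hmem (i + 1) hi, h1, h2⟩

/-- A geodesic with ends in `T` that leaves `T` contains a sub-geodesic around the bad vertex
whose ends are in `T`, with neighbours on the geodesic outside `T`. -/
theorem IsGeodesic.excursion {k : ℕ} {f : ℕ → V} {u v : V} (hf : IsGeodesic A k f u v)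
    {T : Set V} (hu : u ∈ T) (hv : v ∈ T) {i : ℕ} (hi : i ≤ k) (hfi : f i ∉ T) :
    ∃ a b, a ≤ i ∧ i ≤ b ∧ b ≤ k ∧ f a ∈ T ∧ f b ∈ T ∧
      (∃ x, x ∉ T ∧ A (f a) x) ∧ (∃ x, x ∉ T ∧ A x (f b)) ∧
      IsGeodesic A (b - a) (fun t => f (a + t)) (f a) (f b) := by
  obtain ⟨a, ha, ha1, ha2⟩ := exists_cross (k := i) (f := f) (P := (· ∈ T))
    (by rw [hf.1.1]; exact hu) hfi
  obtain ⟨b, hb, hb1, hb2⟩ := exists_cross (k := k - i) (f := fun t => f (i + t))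
    (P := (· ∉ T)) (by simpa using hfi)
    (by simp only [not_not]; rw [show i + (k - i) = k by omega, hf.1.2.1]; exact hv)
  simp only [not_not] at hb1 hb2
  refine ⟨a, i + (b + 1), by omega, by omega, by omega, ha1, hb2,
    ⟨f (a + 1), ha2, hf.1.2.2 a (by omega)⟩, ⟨f (i + b), hb1, ?_⟩, hf.sub (by omega) (by omega)⟩
  exact hf.1.2.2 (i + b) (by omega)

theorem DConvex.union_comp {C : Set V} (hC : DConvex A C) (T : Set V)
    (hT : ∀ x y, A x y → (x ∈ C ∪ T ∧ y ∉ C ∪ T ∨ x ∉ C ∪ T ∧ y ∈ C ∪ T) → x ∈ C ∨ y ∈ C) :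
    DConvex A (C ∪ T) := by
  refine ⟨hC.1.mono Set.subset_union_left, ?_⟩
  intro u hu v hv k f hf i hi
  by_contra hbad
  obtain ⟨a, b, hai, hib, hbk, ha, hb, ⟨x, hx, hax⟩, ⟨y, hy, hyb⟩, hgeo⟩ :=
    hf.excursion hu hv hi hbad
  have haC : f a ∈ C := by
    rcases hT _ _ hax (Or.inl ⟨ha, hx⟩) with h | h
    · exact h
    · exact absurd (Or.inl h) hx
  have hbC : f b ∈ C := by
    rcases hT _ _ hyb (Or.inr ⟨hy, hb⟩) with h | h
    · exact absurd (Or.inl h) hy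
    · exact h
  have : f (a + (i - a)) ∈ C := hC.2 _ haC _ hbC _ _ hgeo (i - a) (by omega)
  rw [show a + (i - a) = i by omega] at this
  exact hbad (Or.inl this)

theorem dconvex_singleton (u : V) : DConvex A {u} := by
  refine ⟨⟨u, rfl⟩, ?_⟩
  intro x hx y hy k f hf i hi
  have hx' : x = u := hx
  have hy' : y = u := hy
  subst hx'
  subst hy'
  have := hf.2 0 _ (IsDirWalk.refl y)
  have hi0 : i = 0 := by omega
  subst hi0
  exact hf.1.1

end Walks

section Con

variable [Fintype V] {A : V → V → Prop}

theorem convexityNumber_eq {k : ℕ} (h1 : ∃ C : Set V, DConvex A C ∧ C ≠ Set.univ ∧ C.ncard = k)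
    (h2 : ∀ C : Set V, DConvex A C → C ≠ Set.univ → C.ncard ≤ k) : convexityNumber A = k := by
  apply IsGreatest.csSup_eq
  refine ⟨h1, ?_⟩
  rintro j ⟨C, hC, hne, rfl⟩
  exact h2 C hC hne

theorem convexityNumber_spec (hV : ∃ u w : V, u ≠ w) :
    (∃ C : Set V, DConvex A C ∧ C ≠ Set.univ ∧ C.ncard = convexityNumber A) ∧
    (∀ C : Set V, DConvex A C → C ≠ Set.univ → C.ncard ≤ convexityNumber A) := by
  obtain ⟨u, w, huw⟩ := hV
  have hne : {k | ∃ C : Set V, DConvex A C ∧ C ≠ Set.univ ∧ C.ncard = k}.Nonempty := by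
    refine ⟨1, {u}, dconvex_singleton u, ?_, Set.ncard_singleton u⟩
    intro h
    have : w ∈ ({u} : Set V) := by rw [h]; trivial
    exact huw (by simpa using this.symm)
  have hb : BddAbove {k | ∃ C : Set V, DConvex A C ∧ C ≠ Set.univ ∧ C.ncard = k} := by
    refine ⟨Nat.card V, ?_⟩
    rintro k ⟨C, _, _, rfl⟩
    exact Set.ncard_le_card C
  exact ⟨Nat.sSup_mem hne hb, fun C hC h => le_csSup hb ⟨C, hC, h, rfl⟩⟩

end Con

section Necessity

theorem grid_adj {n : ℕ} (x y : Fin n × Fin 3) : (gridGraph n 3).Adj x y ↔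
    ((x.1 : ℕ) = y.1 ∧ ((x.2 : ℕ) + 1 = y.2 ∨ (y.2 : ℕ) + 1 = x.2)) ∨
    ((x.2 : ℕ) = y.2 ∧ ((x.1 : ℕ) + 1 = y.1 ∨ (y.1 : ℕ) + 1 = x.1)) := by
  obtain ⟨i, c⟩ := x
  obtain ⟨j, d⟩ := y
  simp only [gridGraph, SimpleGraph.boxProd_adj, SimpleGraph.pathGraph_adj, Fin.ext_iff]
  tauto

/-- the checkerboard colouring of the grid -/
def gcol {n : ℕ} (x : Fin n × Fin 3) : Bool := decide (((x.1 : ℕ) + x.2) % 2 = 0)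

theorem gcol_adj {n : ℕ} {x y : Fin n × Fin 3} (h : (gridGraph n 3).Adj x y) :
    gcol y = !gcol x := by
  rw [grid_adj] at h
  have : (((x.1 : ℕ) + x.2) % 2 = 0) ↔ ¬ (((y.1 : ℕ) + y.2) % 2 = 0) := by omega
  unfold gcol
  by_cases h2 : ((y.1 : ℕ) + y.2) % 2 = 0
  · have h3 : ¬ (((x.1 : ℕ) + x.2) % 2 = 0) := by tauto
    simp [h2, h3]
  · have h3 : (((x.1 : ℕ) + x.2) % 2 = 0) := by tauto
    simp [h2, h3]

theorem IsOrientation.col {n : ℕ} {A : Fin n × Fin 3 → Fin n × Fin 3 → Prop}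
    (hA : IsOrientation (gridGraph n 3) A) : ∀ x y, A x y → gcol y = !gcol x :=
  fun x y h => gcol_adj (hA.1 x y h)

/-- Every edge of the grid has two non-adjacent outer neighbours. -/
theorem grid_edge_ends {n : ℕ} (hn : 3 ≤ n) {v w : Fin n × Fin 3}
    (h : (gridGraph n 3).Adj v w) :
    ∃ u z, (gridGraph n 3).Adj v u ∧ u ≠ w ∧ (gridGraph n 3).Adj w z ∧ z ≠ v ∧
      ¬ (gridGraph n 3).Adj u z := by
  obtain ⟨⟨i, hi⟩, ⟨c, hc⟩⟩ := v
  obtain ⟨⟨j, hj⟩, ⟨d, hd⟩⟩ := w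
  simp only [grid_adj] at h ⊢
  -- vertical neighbour of a row
  obtain ⟨i', hi', hii⟩ : ∃ i', i' < n ∧ (i + 1 = i' ∨ i' + 1 = i) := by
    by_cases h0 : i = 0
    · exact ⟨1, by omega, by omega⟩
    · exact ⟨i - 1, by omega, by omega⟩
  obtain ⟨c', hc', hcc⟩ : ∃ c', c' < 3 ∧ (c + 1 = c' ∨ c' + 1 = c) := by
    by_cases h0 : c = 0
    · exact ⟨1, by omega, by omega⟩
    · exact ⟨c - 1, by omega, by omega⟩
  rcases h with ⟨h1, h2⟩ | ⟨h1, h2⟩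
  · -- horizontal edge
    by_cases hc1 : c = 1
    · refine ⟨(⟨i, hi⟩, ⟨2 - d, by omega⟩), (⟨i', hi'⟩, ⟨d, hd⟩), ?_⟩
      simp only [ne_eq, Prod.mk.injEq, Fin.mk.injEq, true_and]
      omega
    · refine ⟨(⟨i', hi'⟩, ⟨c, hc⟩), (⟨i, hi⟩, ⟨2 - c, by omega⟩), ?_⟩
      simp only [ne_eq, Prod.mk.injEq, Fin.mk.injEq, true_and]
      omega
  · -- vertical edge
    by_cases hx : (i + 1 = j ∧ 1 ≤ i) ∨ (j + 1 = i ∧ i + 1 < n)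
    · refine ⟨(⟨2 * i - j, by omega⟩, ⟨c, hc⟩), (⟨j, hj⟩, ⟨c', hc'⟩), ?_⟩
      simp only [ne_eq, Prod.mk.injEq, Fin.mk.injEq, true_and]
      omega
    · refine ⟨(⟨i, hi⟩, ⟨c', hc'⟩), (⟨2 * j - i, by omega⟩, ⟨d, hd⟩), ?_⟩
      simp only [ne_eq, Prod.mk.injEq, Fin.mk.injEq, true_and]
      omega

variable {n : ℕ} {A : Fin n × Fin 3 → Fin n × Fin 3 → Prop}

/-- an outer vertex cannot have both an in- and an out-neighbour in a convex set -/
theorem exists_in_out (hs : StrongConnected A) {v u : Fin n × Fin 3} (hne : u ≠ v) :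
    (∃ p, A p v) ∧ (∃ q, A v q) := by
  have hun : DConvex A (Set.univ : Set (Fin n × Fin 3)) :=
    ⟨⟨v, trivial⟩, fun _ _ _ _ _ _ _ _ _ => trivial⟩
  obtain ⟨x, y, hxy, -, -, h1, h2⟩ := hun.cut hs (fun x => x = v) (u := v) (w := u) trivial trivial
    rfl hne
  obtain ⟨x', y', hxy', -, -, h1', h2'⟩ := hun.cut hs (fun x => x ≠ v) (u := u) (w := v) trivial
    trivial hne (by simp)
  simp only [ne_eq, not_not] at h2'
  subst h1
  subst h2'
  exact ⟨⟨_, hxy'⟩, ⟨_, hxy⟩⟩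

theorem compl_pair_false (hn : 3 ≤ n) (hA : IsOrientation (gridGraph n 3) A)
    (hs : StrongConnected A) {C : Set (Fin n × Fin 3)} (hC : DConvex A C) {v w : Fin n × Fin 3}
    (hv : v ∉ C) (hw : w ∉ C) (hall : ∀ x, x ≠ v → x ≠ w → x ∈ C) (hvw : A v w) : False := by
  have hcol := hA.col
  have hne : v ≠ w := by
    rintro rfl
    exact hA.2.2 _ _ hvw hvw
  obtain ⟨u, z, hu, huw, hz, hzv, hnadj⟩ := grid_edge_ends hn (hA.1 _ _ hvw)
  have huC : u ∈ C := hall u hu.ne' huw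
  have hzC : z ∈ C := hall z hzv hz.ne'
  obtain ⟨⟨p, hp⟩, -⟩ := exists_in_out hs (v := v) (u := w) hne.symm
  obtain ⟨-, ⟨q, hq⟩⟩ := exists_in_out hs (v := w) (u := v) hne
  have hpC : p ∈ C := hall p (hA.1 _ _ hp).ne (by rintro rfl; exact hA.2.2 _ _ hvw hp)
  have hqC : q ∈ C := hall q (by rintro rfl; exact hA.2.2 _ _ hvw hq) (hA.1 _ _ hq).ne'
  have huv : A u v := by
    rcases hA.2.1 _ _ hu with h | h
    · exfalso
      exact hv (hC.two hcol hp h (by rintro rfl; exact hA.2.2 _ _ hp h) hpC huC)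
    · exact h
  have hwz : A w z := by
    rcases hA.2.1 _ _ hz with h | h
    · exact h
    · exfalso
      exact hw (hC.two hcol h hq (by rintro rfl; exact hA.2.2 _ _ hq h) hzC hqC)
  exact hv (hC.three hcol huv hvw hwz (fun h => hnadj (hA.1 _ _ h)) huC hzC).1

theorem ncard_le_of_convex (hn : 3 ≤ n) (hA : IsOrientation (gridGraph n 3) A)
    (hs : StrongConnected A) {C : Set (Fin n × Fin 3)} (hC : DConvex A C) (hne : C ≠ Set.univ) :
    C.ncard ≤ 3 * n - 3 := by
  by_contra hlt
  have hcard := Set.ncard_add_ncard_compl C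
  have hN : Nat.card (Fin n × Fin 3) = 3 * n := by
    simp [Nat.card_eq_fintype_card, mul_comm]
  rw [hN] at hcard
  have hpos : Cᶜ.ncard ≠ 0 := by
    intro h0
    rw [Set.ncard_eq_zero] at h0
    exact hne (Set.compl_empty_iff.mp h0)
  have hcol := hA.col
  have h12 : Cᶜ.ncard = 1 ∨ Cᶜ.ncard = 2 := by omega
  -- in both cases the complement is contained in a pair
  obtain ⟨v, w, hv, hw, hall⟩ : ∃ v w, v ∉ C ∧ w ∉ C ∧ ∀ x, x ≠ v → x ≠ w → x ∈ C := by
    rcases h12 with h | h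
    · obtain ⟨v, hv⟩ := Set.ncard_eq_one.mp h
      have hm : ∀ x, x ∉ C ↔ x = v := fun x => by
        rw [← Set.mem_compl_iff, hv, Set.mem_singleton_iff]
      exact ⟨v, v, (hm v).2 rfl, (hm v).2 rfl, fun x hx _ => by
        by_contra hxC; exact hx ((hm x).1 hxC)⟩
    · obtain ⟨v, w, hvw, hv⟩ := Set.ncard_eq_two.mp h
      have hm : ∀ x, x ∉ C ↔ x = v ∨ x = w := fun x => by
        rw [← Set.mem_compl_iff, hv, Set.mem_insert_iff, Set.mem_singleton_iff]
      exact ⟨v, w, (hm v).2 (Or.inl rfl), (hm w).2 (Or.inr rfl), fun x hx hx' => by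
        by_contra hxC; exact ((hm x).1 hxC).elim hx hx'⟩
  obtain ⟨c, hc⟩ := hC.1
  obtain ⟨⟨p, hp⟩, ⟨q, hq⟩⟩ := exists_in_out hs (v := v) (u := c) (by rintro rfl; exact hv hc)
  by_cases hpC : p ∈ C
  · by_cases hqC : q ∈ C
    · exact hv (hC.two hcol hp hq (by rintro rfl; exact hA.2.2 _ _ hp hq) hpC hqC)
    · have hqv : q ≠ v := (hA.1 _ _ hq).ne'
      have : q = w := by
        by_contra hqw
        exact hqC (hall q hqv hqw)
      subst this
      exact compl_pair_false hn hA hs hC hv hw hall hq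
  · have hpv : p ≠ v := (hA.1 _ _ hp).ne
    have : p = w := by
      by_contra hqw
      exact hpC (hall p hpv hqw)
    subst this
    exact compl_pair_false hn hA hs hC hw hv (fun x h1 h2 => hall x h2 h1) hp

/-- two common columns between consecutive rows of a convex set -/
theorem row_overlap (hA : IsOrientation (gridGraph n 3) A)
    (hs : StrongConnected A) {C : Set (Fin n × Fin 3)} (hC : DConvex A C) (t : ℕ)
    {u w : Fin n × Fin 3} (hu : u ∈ C) (hw : w ∈ C) (hut : (u.1 : ℕ) ≤ t) (hwt : t < (w.1 : ℕ)) :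
    ∃ (h : t + 1 < n) (c d : Fin 3), c ≠ d ∧ (⟨t, by omega⟩, c) ∈ C ∧ (⟨t + 1, h⟩, c) ∈ C ∧
      (⟨t, by omega⟩, d) ∈ C ∧ (⟨t + 1, h⟩, d) ∈ C := by
  obtain ⟨x, y, hxy, hx, hy, h1, h2⟩ := hC.cut hs (fun x => (x.1 : ℕ) ≤ t) hu hw hut (by omega)
  obtain ⟨x', y', hxy', hx', hy', h1', h2'⟩ := hC.cut hs (fun x => t < (x.1 : ℕ)) hw hu hwt (by omega)
  have ht : t + 1 < n := lt_of_le_of_lt hwt w.1.2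
  have ht0 : t < n := by omega
  have e1 := (grid_adj _ _).1 (hA.1 _ _ hxy)
  have e2 := (grid_adj _ _).1 (hA.1 _ _ hxy')
  obtain ⟨i, c⟩ := x
  obtain ⟨j, c'⟩ := y
  obtain ⟨i', d⟩ := x'
  obtain ⟨j', d'⟩ := y'
  simp only at e1 e2 h1 h2 h1' h2'
  have hi : i = ⟨t, ht0⟩ := Fin.ext (by simp only; omega)
  have hj : j = ⟨t + 1, ht⟩ := Fin.ext (by simp only; omega)
  have hi' : i' = ⟨t + 1, ht⟩ := Fin.ext (by simp only; omega)
  have hj' : j' = ⟨t, ht0⟩ := Fin.ext (by simp only; omega)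
  have hc : c' = c := Fin.ext (by omega)
  have hd : d' = d := Fin.ext (by omega)
  subst hi hj hi' hj' hc hd
  refine ⟨ht, c', d', ?_, hx, hy, hy', hx'⟩
  rintro rfl
  exact hA.2.2 _ _ hxy hxy'

/-- two distinct neighbours inside a nontrivial convex set -/
theorem two_nbrs (hA : IsOrientation (gridGraph n 3) A)
    (hs : StrongConnected A) {C : Set (Fin n × Fin 3)} (hC : DConvex A C)
    {u w : Fin n × Fin 3} (hu : u ∈ C) (hw : w ∈ C) (huw : w ≠ u) :
    ∃ p q, p ≠ q ∧ p ∈ C ∧ q ∈ C ∧ (gridGraph n 3).Adj u p ∧ (gridGraph n 3).Adj u q := by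
  obtain ⟨x, y, hxy, hx, hy, h1, h2⟩ := hC.cut hs (fun x => x = u) hu hw rfl huw
  obtain ⟨x', y', hxy', hx', hy', h1', h2'⟩ :=
    hC.cut hs (fun x => x ≠ u) hw hu huw (by simp)
  simp only [ne_eq, not_not] at h2'
  subst h1
  subst h2'
  refine ⟨y, x', ?_, hy, hx', hA.1 _ _ hxy, (hA.1 _ _ hxy').symm⟩
  rintro rfl
  exact hA.2.2 _ _ hxy hxy'

end Necessity

section Small

/-- membership with natural number coordinates -/
def nmem {n : ℕ} (C : Set (Fin n × Fin 3)) (i c : ℕ) : Prop :=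
  ∃ (h : i < n) (hc : c < 3), ((⟨i, h⟩, ⟨c, hc⟩) : Fin n × Fin 3) ∈ C

theorem nmem_of_mem {n : ℕ} {C : Set (Fin n × Fin 3)} {x : Fin n × Fin 3} (h : x ∈ C) :
    nmem C x.1 x.2 := ⟨x.1.2, x.2.2, h⟩

theorem nmem_iff {n : ℕ} {C : Set (Fin n × Fin 3)} (x : Fin n × Fin 3) :
    nmem C x.1 x.2 ↔ x ∈ C := ⟨fun ⟨_, _, h⟩ => h, nmem_of_mem⟩

/-- at least two of four Booleans are true -/
def two4 (a b c d : Bool) : Bool := 2 ≤ a.toNat + b.toNat + c.toNat + d.toNat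

/-- number of true values in a 3x3 pattern -/
def cnt9 (a b c d e f g h i : Bool) : ℕ :=
  a.toNat + b.toNat + c.toNat + d.toNat + e.toNat + f.toNat + g.toNat + h.toNat + i.toNat

set_option synthInstance.maxSize 100000 in
set_option synthInstance.maxHeartbeats 400000 in
theorem pattern_small : ∀ a b c d e f g h i : Bool,
    (a || b || c) = true →
    (a = true → two4 b false d false = true) → (b = true → two4 c a e false = true) →
    (c = true → two4 false b f false = true) →
    (d = true → two4 e false g a = true) → (e = true → two4 f d h b = true) →
    (f = true → two4 false e i c = true) →
    (g = true → two4 h false false d = true) → (h = true → two4 i g false e = true) →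
    (i = true → two4 false h false f = true) →
    ((d || e || f || g || h || i) = true → two4 (a && d) (b && e) (c && f) false = true) →
    ((g || h || i) = true → two4 (d && g) (e && h) (f && i) false = true) →
    cnt9 a b c d e f g h i ≠ 2 ∧ cnt9 a b c d e f g h i ≠ 3 ∧ cnt9 a b c d e f g h i ≠ 5 ∧
    (cnt9 a b c d e f g h i = 7 → d = true ∧ e = true ∧ f = true ∧
      ((c = false ∧ g = false ∧ h = true) ∨ (a = false ∧ i = false ∧ h = true))) := by
  decide +kernel

theorem two4_of {a b c d : Bool} {P : Fin 4 → Prop} (hP : ∃ x y : Fin 4, x ≠ y ∧ P x ∧ P y)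
    (ha : P 0 → a = true) (hb : P 1 → b = true) (hc : P 2 → c = true) (hd : P 3 → d = true) :
    two4 a b c d = true := by
  obtain ⟨x, y, hxy, hx, hy⟩ := hP
  unfold two4
  fin_cases x <;> fin_cases y <;> simp_all <;> omega

variable {n : ℕ} {A : Fin n × Fin 3 → Fin n × Fin 3 → Prop}

/-- the four possible neighbours of a cell -/
def nbrP (C : Set (Fin n × Fin 3)) (i c : ℕ) (k : Fin 4) : Prop :=
  if k = 0 then nmem C i (c + 1) else if k = 1 then 1 ≤ c ∧ nmem C i (c - 1)
  else if k = 2 then nmem C (i + 1) c else 1 ≤ i ∧ nmem C (i - 1) c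

theorem nmem_deg (hA : IsOrientation (gridGraph n 3) A)
    (hs : StrongConnected A) {C : Set (Fin n × Fin 3)} (hC : DConvex A C)
    (hnt : C.Nontrivial) {i c : ℕ} (h : nmem C i c) :
    ∃ x y : Fin 4, x ≠ y ∧ nbrP C i c x ∧ nbrP C i c y := by
  obtain ⟨hi, hc, hu⟩ := h
  obtain ⟨w, hw, hne⟩ := hnt.exists_ne ((⟨i, hi⟩, ⟨c, hc⟩) : Fin n × Fin 3)
  obtain ⟨p, q, hpq, hp, hq, ap, aq⟩ := two_nbrs hA hs hC hu hw hne
  rw [grid_adj] at ap aq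
  have key : ∀ p : Fin n × Fin 3, p ∈ C →
      (i = p.1 ∧ (c + 1 = p.2 ∨ (p.2 : ℕ) + 1 = c)) ∨
      (c = p.2 ∧ (i + 1 = p.1 ∨ (p.1 : ℕ) + 1 = i)) →
      ∃ x : Fin 4, nbrP C i c x ∧ (x = 0 → i = p.1 ∧ c + 1 = p.2) ∧
        (x = 1 → i = p.1 ∧ (p.2 : ℕ) + 1 = c) ∧ (x = 2 → c = p.2 ∧ i + 1 = p.1) ∧
        (x = 3 → c = p.2 ∧ (p.1 : ℕ) + 1 = i) := by
    intro p hp ap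
    have hm := nmem_of_mem hp
    rcases ap with ⟨h1, h2 | h2⟩ | ⟨h1, h2 | h2⟩
    · refine ⟨0, ?_, by simp [h1, h2]⟩
      rw [← h1, ← h2] at hm
      simpa [nbrP] using hm
    · refine ⟨1, ?_, by simp [h1, h2]⟩
      have e : (p.2 : ℕ) = c - 1 := by omega
      rw [← h1, e] at hm
      exact ⟨by omega, hm⟩
    · refine ⟨2, ?_, by simp [h1, h2]⟩
      rw [← h1, ← h2] at hm
      exact hm
    · refine ⟨3, ?_, by simp [h1, h2]⟩
      have e : (p.1 : ℕ) = i - 1 := by omega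
      rw [← h1, e] at hm
      exact ⟨by omega, hm⟩
  obtain ⟨x, hx, x0, x1, x2, x3⟩ := key p hp ap
  obtain ⟨y, hy, y0, y1, y2, y3⟩ := key q hq aq
  refine ⟨x, y, ?_, hx, hy⟩
  rintro rfl
  apply hpq
  have e : (p.1 : ℕ) = q.1 ∧ (p.2 : ℕ) = q.2 := by
    have hx4 : x = 0 ∨ x = 1 ∨ x = 2 ∨ x = 3 := by fin_cases x <;> simp
    rcases hx4 with h | h | h | h
    · have := x0 h; have := y0 h; omega
    · have := x1 h; have := y1 h; omega
    · have := x2 h; have := y2 h; omega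
    · have := x3 h; have := y3 h; omega
  exact Prod.ext (Fin.ext e.1) (Fin.ext e.2)

theorem nmem_overlap (hA : IsOrientation (gridGraph n 3) A)
    (hs : StrongConnected A) {C : Set (Fin n × Fin 3)} (hC : DConvex A C) (t : ℕ)
    {i c j d : ℕ} (hu : nmem C i c) (hw : nmem C j d) (hut : i ≤ t) (hwt : t < j) :
    ∃ c d : Fin 3, c ≠ d ∧ nmem C t c ∧ nmem C (t + 1) c ∧ nmem C t d ∧ nmem C (t + 1) d := by
  obtain ⟨_, _, hu⟩ := hu
  obtain ⟨_, _, hw⟩ := hw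
  obtain ⟨h, c, d, hcd, h1, h2, h3, h4⟩ := row_overlap hA hs hC t hu hw hut hwt
  exact ⟨c, d, hcd, nmem_of_mem h1, nmem_of_mem h2, nmem_of_mem h3, nmem_of_mem h4⟩

theorem ncard_ge_of_list {C : Set (Fin n × Fin 3)} (l : List (ℕ × ℕ)) (hnd : l.Nodup)
    (hl : ∀ p ∈ l, nmem C p.1 p.2) : l.length ≤ C.ncard := by
  classical
  let e : Fin n × Fin 3 → ℕ × ℕ := fun x => (x.1, x.2)
  have he : Function.Injective e := by
    intro x y h
    simp only [e, Prod.mk.injEq] at h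
    exact Prod.ext (Fin.ext h.1) (Fin.ext h.2)
  rw [← Set.ncard_image_of_injective C he, ← List.toFinset_card_of_nodup hnd,
    ← Set.ncard_coe_finset]
  apply Set.ncard_le_ncard
  · intro p hp
    have hp' : p ∈ l := by simpa using hp
    obtain ⟨h1, h2, h3⟩ := hl p hp'
    exact ⟨_, h3, rfl⟩
  · exact (Set.toFinite C).image e

/-- if the rows of `C` lie in `m, m+1, m+2`, the cardinality is the pattern count -/
theorem ncard_eq_cnt {C : Set (Fin n × Fin 3)} (m : ℕ) (B : ℕ → ℕ → Bool)
    (hB : ∀ r c, B r c = true ↔ nmem C (m + r) c)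
    (hrow : ∀ x ∈ C, m ≤ (x.1 : ℕ) ∧ (x.1 : ℕ) ≤ m + 2) :
    C.ncard = cnt9 (B 0 0) (B 0 1) (B 0 2) (B 1 0) (B 1 1) (B 1 2) (B 2 0) (B 2 1) (B 2 2) := by
  classical
  let e : Fin n × Fin 3 → ℕ × ℕ := fun x => (x.1 - m, x.2)
  have he : Set.InjOn e C := by
    intro x hx y hy h
    simp only [e, Prod.mk.injEq] at h
    have := hrow x hx
    have := hrow y hy
    exact Prod.ext (Fin.ext (by omega)) (Fin.ext h.2)
  rw [← Set.ncard_image_of_injOn he]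
  have him : e '' C = ↑((Finset.range 3 ×ˢ Finset.range 3).filter (fun p => B p.1 p.2 = true)) := by
    ext ⟨r, c⟩
    simp only [Set.mem_image, Finset.coe_filter, Finset.mem_product, Finset.mem_range,
      Set.mem_setOf_eq, hB]
    constructor
    · rintro ⟨x, hx, h⟩
      simp only [e, Prod.mk.injEq] at h
      have := hrow x hx
      have h3 := x.2.2
      refine ⟨by omega, ?_⟩
      rw [show m + r = (x.1 : ℕ) by omega, ← h.2]
      exact nmem_of_mem hx
    · rintro ⟨-, h1, h2, h3⟩
      exact ⟨_, h3, by simp [e]⟩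
  rw [him, Set.ncard_coe_finset, Finset.card_filter, Finset.sum_product]
  simp only [Finset.sum_range_succ, Finset.sum_range_zero, cnt9]
  have ht : ∀ b : Bool, (if b = true then 1 else 0) = b.toNat := by decide
  simp only [ht]
  omega

theorem small_cases (hA : IsOrientation (gridGraph n 3) A)
    (hs : StrongConnected A) {C : Set (Fin n × Fin 3)} (hC : DConvex A C)
    (hmax : ∀ D : Set (Fin n × Fin 3), DConvex A D → D ≠ Set.univ → D.ncard ≤ C.ncard)
    (hnt : C.Nontrivial) : C.ncard ≠ 2 ∧ C.ncard ≠ 3 ∧ C.ncard ≠ 5 ∧ C.ncard ≠ 7 := by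
  classical
  -- minimal row
  have hex : ∃ i, ∃ c, nmem C i c := by
    obtain ⟨x, hx⟩ := hC.1
    exact ⟨_, _, nmem_of_mem hx⟩
  obtain ⟨c0, hm⟩ := Nat.find_spec hex
  have hmin : ∀ i c, nmem C i c → Nat.find hex ≤ i := fun i c h => Nat.find_min' hex ⟨c, h⟩
  generalize Nat.find hex = m at hm hmin
  by_cases hbig : ∃ j d, nmem C j d ∧ m + 2 < j
  · obtain ⟨j, d, hj, hmj⟩ := hbig
    obtain ⟨c1, d1, n1, p1, p2, p3, p4⟩ := nmem_overlap hA hs hC m hm hj le_rfl (by omega)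
    obtain ⟨c2, d2, n2, q1, q2, q3, q4⟩ := nmem_overlap hA hs hC (m + 2) hm hj (by omega) (by omega)
    have n1' : (c1 : ℕ) ≠ d1 := fun h => n1 (Fin.ext h)
    have n2' : (c2 : ℕ) ≠ d2 := fun h => n2 (Fin.ext h)
    have := ncard_ge_of_list (C := C) [(m, (c1 : ℕ)), (m + 1, (c1 : ℕ)), (m, (d1 : ℕ)),
      (m + 1, (d1 : ℕ)), (m + 2, (c2 : ℕ)), (m + 2 + 1, (c2 : ℕ)), (m + 2, (d2 : ℕ)),
      (m + 2 + 1, (d2 : ℕ))] (by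
        have h9 : m ≠ m + 2 + 1 := (by omega)
        simp [n1', n2', h9]) (by
        simp only [List.mem_cons, List.not_mem_nil, or_false]
        rintro p (rfl | rfl | rfl | rfl | rfl | rfl | rfl | rfl) <;> assumption)
    simp only [List.length_cons, List.length_nil] at this
    omega
  · push Not at hbig
    have hrow : ∀ x ∈ C, m ≤ (x.1 : ℕ) ∧ (x.1 : ℕ) ≤ m + 2 := fun x hx =>
      ⟨hmin _ _ (nmem_of_mem hx), hbig _ _ (nmem_of_mem hx)⟩
    obtain ⟨B, hB⟩ : ∃ B : ℕ → ℕ → Bool, ∀ r c, B r c = true ↔ nmem C (m + r) c :=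
      ⟨fun r c => decide (nmem C (m + r) c), fun r c => by simp⟩
    have hcard := ncard_eq_cnt m B hB hrow
    have no3 : ∀ i, ¬ nmem C i 3 := fun i ⟨_, h, _⟩ => by omega
    have noUp : ∀ c, ¬ (1 ≤ m ∧ nmem C (m - 1) c) := fun c ⟨h1, h2⟩ => by
      have := hmin _ _ h2; omega
    have noDown : ∀ c, ¬ nmem C (m + 3) c := fun c h => by
      have := hbig _ _ h; omega
    have deg : ∀ r c, B r c = true → ∃ x y : Fin 4, x ≠ y ∧ nbrP C (m + r) c x ∧
        nbrP C (m + r) c y := fun r c h => nmem_deg hA hs hC hnt ((hB r c).1 h)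
    have hR : ∀ r c, nbrP C (m + r) c 0 → B r (c + 1) = true := fun r c h => (hB _ _).2 h
    have hR2 : ∀ r b, nbrP C (m + r) 2 0 → b = true := fun r b h => absurd h (no3 _)
    have hL : ∀ r c, nbrP C (m + r) (c + 1) 1 → B r c = true := fun r c h => (hB _ _).2 h.2
    have hL0 : ∀ r b, nbrP C (m + r) 0 1 → b = true := fun r b h => absurd h.1 (by omega)
    have hD : ∀ r c, nbrP C (m + r) c 2 → B (r + 1) c = true := fun r c h => (hB _ _).2 h
    have hD2 : ∀ c b, nbrP C (m + 2) c 2 → b = true := fun c b h => absurd h (noDown c)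
    have hU : ∀ r c, nbrP C (m + (r + 1)) c 3 → B r c = true := fun r c h => (hB _ _).2 h.2
    have hU0 : ∀ c b, nbrP C (m + 0) c 3 → b = true := fun c b h => absurd h (noUp c)
    have ov : ∀ r r' c', B r' c' = true → r < r' →
        two4 (B r 0 && B (r + 1) 0) (B r 1 && B (r + 1) 1) (B r 2 && B (r + 1) 2) false = true := by
      intro r r' c' h hr
      obtain ⟨c, d, hcd, h1, h2, h3, h4⟩ :=
        nmem_overlap hA hs hC (m + r) hm ((hB _ _).1 h) (by omega) (by omega)
      rw [← hB r] at h1 h3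
      rw [show m + r + 1 = m + (r + 1) by omega, ← hB (r + 1)] at h2 h4
      apply two4_of (P := fun k : Fin 4 => (B r k && B (r + 1) k) = true ∧ (k : ℕ) < 3)
      · refine ⟨c.castSucc, d.castSucc, ?_, ?_, ?_⟩
        · simpa using hcd
        · simp [h1, h2]
        · simp [h3, h4]
      · exact fun h => h.1
      · exact fun h => h.1
      · exact fun h => h.1
      · exact fun h => absurd h.2 (by decide)
    have h0 : (B 0 0 || B 0 1 || B 0 2) = true := by
      obtain ⟨h1, h2, h3⟩ := hm
      have hb : B 0 c0 = true := (hB 0 c0).2 ⟨h1, h2, h3⟩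
      interval_cases c0 <;> simp [hb]
    obtain ⟨k2, k3, k5, k7⟩ := pattern_small (B 0 0) (B 0 1) (B 0 2) (B 1 0) (B 1 1) (B 1 2)
      (B 2 0) (B 2 1) (B 2 2) h0
      (fun h => two4_of (deg 0 0 h) (hR 0 0) (hL0 0 _) (hD 0 0) (hU0 0 _))
      (fun h => two4_of (deg 0 1 h) (hR 0 1) (hL 0 0) (hD 0 1) (hU0 1 _))
      (fun h => two4_of (deg 0 2 h) (hR2 0 _) (hL 0 1) (hD 0 2) (hU0 2 _))
      (fun h => two4_of (deg 1 0 h) (hR 1 0) (hL0 1 _) (hD 1 0) (hU 0 0))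
      (fun h => two4_of (deg 1 1 h) (hR 1 1) (hL 1 0) (hD 1 1) (hU 0 1))
      (fun h => two4_of (deg 1 2 h) (hR2 1 _) (hL 1 1) (hD 1 2) (hU 0 2))
      (fun h => two4_of (deg 2 0 h) (hR 2 0) (hL0 2 _) (hD2 0 _) (hU 1 0))
      (fun h => two4_of (deg 2 1 h) (hR 2 1) (hL 2 0) (hD2 1 _) (hU 1 1))
      (fun h => two4_of (deg 2 2 h) (hR2 2 _) (hL 2 1) (hD2 2 _) (hU 1 2))
      (by
        intro h
        simp only [Bool.or_eq_true] at h
        rcases h with ((((h | h) | h) | h) | h) | h <;> exact ov 0 _ _ h (by omega))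
      (by
        intro h
        simp only [Bool.or_eq_true] at h
        rcases h with (h | h) | h <;> exact ov 1 _ _ h (by omega))
    rw [← hcard] at k2 k3 k5 k7
    refine ⟨k2, k3, k5, ?_⟩
    intro h7
    obtain ⟨e0, e1, e2, hor⟩ := k7 h7
    -- row `m+1` is full, one corner is missing above and one below
    have hfull : ∀ x : Fin n × Fin 3, (x.1 : ℕ) = m + 1 → x ∈ C := by
      intro x hx
      rw [← nmem_iff, hx, ← hB 1]
      have := x.2.2
      have h3 : (x.2 : ℕ) = 0 ∨ (x.2 : ℕ) = 1 ∨ (x.2 : ℕ) = 2 := by omega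
      rcases h3 with h | h | h <;> rw [h] <;> assumption
    obtain ⟨hmn, a, b, ha, hb⟩ : ∃ (_ : m + 2 < n) (a b : Fin 3), ¬ nmem C m a ∧
        ¬ nmem C (m + 2) b := by
      rcases hor with ⟨ha, hb, hh⟩ | ⟨ha, hb, hh⟩
      · obtain ⟨hlt, _⟩ := (hB 2 1).1 hh
        refine ⟨hlt, 2, 0, ?_, ?_⟩
        · intro h
          have := (hB 0 2).2 h
          simp [ha] at this
        · intro h
          have := (hB 2 0).2 h
          simp [hb] at this
      · obtain ⟨hlt, _⟩ := (hB 2 1).1 hh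
        refine ⟨hlt, 0, 2, ?_, ?_⟩
        · intro h
          have := (hB 0 0).2 h
          simp [ha] at this
        · intro h
          have := (hB 2 2).2 h
          simp [hb] at this
    have ha' : ((⟨m, by omega⟩, a) : Fin n × Fin 3) ∉ C := fun h => ha (nmem_of_mem h)
    have hb' : ((⟨m + 2, by omega⟩, b) : Fin n × Fin 3) ∉ C := fun h => hb (nmem_of_mem h)
    let T : Set (Fin n × Fin 3) := {x | (x.1 : ℕ) ≤ m}
    have hT : ∀ x, x ∈ T ↔ (x.1 : ℕ) ≤ m := fun x => Iff.rfl
    have hconv : DConvex A (C ∪ T) := by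
      apply hC.union_comp
      intro x y hxy h
      by_contra hno
      push Not at hno
      obtain ⟨hx, hy⟩ := hno
      have e := (grid_adj _ _).1 (hA.1 _ _ hxy)
      have fx : (x.1 : ℕ) ≠ m + 1 := fun h => hx (hfull x h)
      have fy : (y.1 : ℕ) ≠ m + 1 := fun h => hy (hfull y h)
      simp only [Set.mem_union, hx, hy, hT, false_or] at h
      omega
    have hlt := hmax _ hconv (by
      intro h
      have : ((⟨m + 2, by omega⟩, b) : Fin n × Fin 3) ∈ C ∪ T := by rw [h]; trivial
      rcases this with h | h
      · exact hb' h
      · rw [hT] at h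
        simp at h)
    have hss : C.ncard < (C ∪ T).ncard := by
      apply Set.ncard_lt_ncard
      · refine Set.ssubset_iff_of_subset Set.subset_union_left |>.2 ⟨_, Or.inr ?_, ha'⟩
        rw [hT]
      · exact Set.toFinite _
    omega

theorem necessity (hn : 3 ≤ n) {k : ℕ} (hk : k ∈ strongConvexitySpectrum (gridGraph n 3)) :
    k ∈ {k : ℕ | 1 ≤ k ∧ k ≤ 3 * n - 3} \ ({2, 3, 5, 7} : Set ℕ) := by
  obtain ⟨A, hA, hs, rfl⟩ := hk
  obtain ⟨⟨C, hC, hne, hcard⟩, hmax⟩ := convexityNumber_spec (A := A)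
    ⟨(⟨0, by omega⟩, 0), (⟨0, by omega⟩, 1), by simp⟩
  rw [← hcard] at hmax ⊢
  have h1 : 1 ≤ C.ncard := (Set.ncard_pos (Set.toFinite C)).2 hC.1
  refine ⟨⟨h1, ncard_le_of_convex hn hA hs hC hne⟩, ?_⟩
  simp only [Set.mem_insert_iff, Set.mem_singleton_iff]
  by_cases hnt : C.Nontrivial
  · obtain ⟨a, b, c, d⟩ := small_cases hA hs hC hmax hnt
    tauto
  · rw [Set.not_nontrivial_iff] at hnt
    have := Set.ncard_le_one_iff_subsingleton.2 hnt
    omega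

end Small

/-! ### Extension of orientations by one row -/

section Ext

/-- A directed 4-cycle, in one of the two directions. -/
def Cell (A : V → V → Prop) (p q r s : V) : Prop :=
  (A p q ∧ A q r ∧ A r s ∧ A s p) ∨ (A q p ∧ A r q ∧ A s r ∧ A p s)

theorem Cell.rot {A : V → V → Prop} {p q r s : V} (h : Cell A p q r s) : Cell A q r s p := by
  unfold Cell at *
  tauto

theorem Cell.symm' {A : V → V → Prop} {p q r s : V} (h : Cell A p q r s) : Cell A q p s r := by
  unfold Cell at *
  tauto

theorem Cell.mem {A : V → V → Prop} {col : V → Bool} (hcol : ∀ x y, A x y → col y = !col x)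
    (hasym : ∀ x y, A x y → ¬ A y x) {p q r s : V} (h : Cell A p q r s) {C : Set V}
    (hC : DConvex A C) (hp : p ∈ C) (hq : q ∈ C) : r ∈ C ∧ s ∈ C := by
  rcases h with ⟨h1, h2, h3, h4⟩ | ⟨h1, h2, h3, h4⟩
  · exact hC.cyc hcol hasym h1 h2 h3 h4 hp hq
  · exact (hC.cyc hcol hasym h1 h4 h3 h2 hq hp).symm

theorem Cell.reach {A : V → V → Prop} {p q r s : V} (h : Cell A p q r s) :
    DirReachable A p r ∧ DirReachable A r p := by
  rcases h with ⟨h1, h2, h3, h4⟩ | ⟨h1, h2, h3, h4⟩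
  · exact ⟨(DirReachable.single h1).trans (DirReachable.single h2),
      (DirReachable.single h3).trans (DirReachable.single h4)⟩
  · exact ⟨(DirReachable.single h4).trans (DirReachable.single h3),
      (DirReachable.single h2).trans (DirReachable.single h1)⟩

/-- `S` is a proper convex set and every nontrivial convex set is inside `S` or everything. -/
def Good (A : V → V → Prop) (S : Set V) : Prop :=
  StrongConnected A ∧ DConvex A S ∧ S ≠ Set.univ ∧
    ∀ C, DConvex A C → C.Nontrivial → C ⊆ S ∨ C = Set.univ

theorem Good.convexityNumber [Fintype V] {A : V → V → Prop} {S : Set V} (h : Good A S) :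
    convexityNumber A = S.ncard := by
  obtain ⟨-, h2, h3, h4⟩ := h
  refine convexityNumber_eq ⟨S, h2, h3, rfl⟩ ?_
  intro C hC hne
  rcases C.subsingleton_or_nontrivial with h | h
  · have h5 : C.ncard ≤ 1 := (Set.ncard_le_one_iff_subsingleton).2 h
    have h6 : 0 < S.ncard := (Set.ncard_pos).2 h2.1
    omega
  · rcases h4 C hC h with h5 | h5
    · exact Set.ncard_le_ncard h5
    · exact absurd h5 hne

theorem IsDirWalk.map {V' : Type*} {A : V → V → Prop} {A' : V' → V' → Prop} {ι : V → V'}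
    (hι : ∀ x y, A x y → A' (ι x) (ι y)) {k : ℕ} {f : ℕ → V} {u v : V}
    (h : IsDirWalk A k f u v) : IsDirWalk A' k (fun i => ι (f i)) (ι u) (ι v) := by
  obtain ⟨h0, h1, h2⟩ := h
  exact ⟨by simp [h0], by simp [h1], fun i hi => hι _ _ (h2 i hi)⟩

theorem Good.extend {V' : Type*} {A : V → V → Prop} {A' : V' → V' → Prop} {S : Set V}
    {S' : Set V'} (hG : Good A S) {col : V' → Bool} (hcol : ∀ x y, A' x y → col y = !col x)
    (hasym : ∀ x y, A' x y → ¬ A' y x) (ι : V → V') (ρ : V' → V) (hρι : ∀ v, ρ (ι v) = v)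
    (hι : ∀ x y, A x y → A' (ι x) (ι y)) (hρ : ∀ x y, A' x y → A (ρ x) (ρ y))
    (o : Fin 3 → V) (w : Fin 3 → V') (hcov : ∀ x, (∃ v, ι v = x) ∨ ∃ c, w c = x)
    (harc : ∀ x y, A' x y → ((∃ v, ι v = x) ∧ (∃ v, ι v = y)) ∨
      (∃ c, x = ι (o c) ∧ y = w c) ∨ (∃ c, x = w c ∧ y = ι (o c)) ∨
      (∃ c, (x = w c ∧ y = w 1) ∨ (x = w 1 ∧ y = w c)))
    (hc0 : Cell A' (ι (o 0)) (ι (o 1)) (w 1) (w 0)) (hc2 : Cell A' (ι (o 2)) (ι (o 1)) (w 1) (w 2))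
    (σ : Prop) (hS : ∀ v, ι v ∈ S' ↔ v ∈ S) (ho : ∀ c, o c ∈ S ↔ σ) (hw : ∀ c, w c ∈ S' ↔ σ) :
    Good A' S' := by
  obtain ⟨g1, g2, g3, g4⟩ := hG
  -- every pair (w c, neighbour) is contained in a cell
  have hcell : ∀ c, ∃ p q r : Fin 3, c = p ∧ Cell A' (ι (o q)) (ι (o r)) (w r) (w q) ∧
      (c = q ∨ c = r) ∧ (q = 1 ∨ r = 1) := by
    intro c
    fin_cases c
    · exact ⟨0, 0, 1, rfl, hc0, by simp, by simp⟩
    · exact ⟨1, 0, 1, rfl, hc0, by simp, by simp⟩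
    · exact ⟨2, 2, 1, rfl, hc2, by simp, by simp⟩
  have hreach : ∀ x, ∃ v, DirReachable A' x (ι v) ∧ DirReachable A' (ι v) x := by
    intro x
    rcases hcov x with ⟨v, rfl⟩ | ⟨c, rfl⟩
    · exact ⟨v, ⟨0, _, IsDirWalk.refl _⟩, ⟨0, _, IsDirWalk.refl _⟩⟩
    · obtain ⟨p, q, r, -, h, hc, -⟩ := hcell c
      rcases hc with rfl | rfl
      · exact ⟨o r, h.rot.reach.2, h.rot.reach.1⟩
      · exact ⟨o q, h.reach.2, h.reach.1⟩
  have hstrong : StrongConnected A' := by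
    intro x y
    obtain ⟨u, hu, -⟩ := hreach x
    obtain ⟨v, -, hv⟩ := hreach y
    obtain ⟨k, f, hf⟩ := g1 u v
    exact (hu.trans ⟨k, _, hf.map hι⟩).trans hv
  -- projecting geodesics
  have hproj : ∀ k f u v, IsGeodesic A' k f (ι u) (ι v) →
      IsGeodesic A k (fun i => ρ (f i)) u v := by
    intro k f u v hf
    have h1 := hf.1.map hρ
    rw [hρι, hρι] at h1
    exact ⟨h1, fun k' f' h' => hf.2 k' _ (h'.map hι)⟩
  have hlift : ∀ k f u v, IsGeodesic A k f u v →
      IsGeodesic A' k (fun i => ι (f i)) (ι u) (ι v) := by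
    intro k f u v hf
    refine ⟨hf.1.map hι, fun k' f' h' => ?_⟩
    have h1 := h'.map hρ
    rw [hρι, hρι] at h1
    exact hf.2 _ _ h1
  have hstat : ∀ x y, A' x y → ¬ (x ∈ S' ↔ y ∈ S') → (∃ v, ι v = x) ∧ (∃ v, ι v = y) := by
    intro x y hxy hne
    rcases harc x y hxy with h | ⟨c, rfl, rfl⟩ | ⟨c, rfl, rfl⟩ | ⟨c, ⟨rfl, rfl⟩ | ⟨rfl, rfl⟩⟩
    · exact h
    all_goals
      exfalso
      apply hne
      simp only [hS, ho, hw]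
  refine ⟨hstrong, ⟨?_, ?_⟩, ?_, ?_⟩
  · obtain ⟨v, hv⟩ := g2.1
    exact ⟨ι v, (hS v).2 hv⟩
  · intro u hu v hv k f hf i hi
    by_contra hbad
    obtain ⟨a, ha, ha1, ha2⟩ := exists_cross (k := i) (f := f) (P := (· ∈ S'))
      (by rw [hf.1.1]; exact hu) hbad
    obtain ⟨b, hb, hb1, hb2⟩ := exists_cross (k := k - i) (f := fun t => f (i + t))
      (P := (· ∉ S')) (by simpa using hbad)
      (by simp only [not_not]; rw [show i + (k - i) = k by omega, hf.1.2.1]; exact hv)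
    simp only [not_not] at hb1 hb2
    have hgeo := hf.sub (i := a) (j := i + (b + 1)) (by omega) (by omega)
    obtain ⟨⟨p, hp⟩, ⟨p', hp'⟩⟩ := hstat _ _ (hf.1.2.2 a (by omega)) (by tauto)
    obtain ⟨-, ⟨q, hq⟩⟩ := hstat _ _ (hf.1.2.2 (i + b) (by omega))
      (by rw [show i + b + 1 = i + (b + 1) by omega]; tauto)
    rw [show i + b + 1 = i + (b + 1) by omega] at hq
    rw [← hp, ← hq] at hgeo
    rw [← hp, hS] at ha1
    rw [← hq, hS] at hb2
    have := g2.2 p ha1 q hb2 _ _ (hproj _ _ _ _ hgeo) 1 (by omega)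
    simp only [← hp', hρι] at this
    apply ha2
    rw [← hp']
    exact (hS p').2 this
  · intro h
    apply g3
    ext v
    simp [← hS, h]
  · intro C hC hnt
    by_cases hsub : C ⊆ S'
    · exact Or.inl hsub
    right
    obtain ⟨x, hxC, hxS⟩ := Set.not_subset.1 hsub
    obtain ⟨z, hzC, hzx⟩ := hnt.exists_ne x
    obtain ⟨x', y, hxy, -, hyC, rfl, hyx⟩ := hC.cut hstrong (· = x) hxC hzC rfl hzx
    -- an old pair
    obtain ⟨a, b, hab, haC, hbC, haS⟩ : ∃ a b, a ≠ b ∧ ι a ∈ C ∧ ι b ∈ C ∧ a ∉ S := by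
      have hfin : ∀ q r, Cell A' (ι (o q)) (ι (o r)) (w r) (w q) → ι (o q) ∈ C → ι (o r) ∈ C →
          ¬ σ → ∃ a b, a ≠ b ∧ ι a ∈ C ∧ ι b ∈ C ∧ a ∉ S := by
        intro q r hc h1 h2 h3
        refine ⟨o q, o r, ?_, h1, h2, by rwa [ho]⟩
        intro heq
        rw [heq] at hc
        rcases hc with ⟨h, -⟩ | ⟨h, -⟩ <;> exact hasym _ _ h h
      rcases harc x' y hxy with ⟨⟨a, rfl⟩, ⟨b, rfl⟩⟩ | ⟨c, rfl, rfl⟩ | ⟨c, rfl, rfl⟩ |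
        ⟨c, ⟨rfl, rfl⟩ | ⟨rfl, rfl⟩⟩
      · exact ⟨a, b, fun h => hyx (by rw [h]), hxC, hyC, by rwa [← hS]⟩
      · have hσ : ¬ σ := by rwa [hS, ho] at hxS
        obtain ⟨p, q, r, -, h, hc, -⟩ := hcell c
        rcases hc with rfl | rfl
        · obtain ⟨h1, h2⟩ := h.rot.rot.rot.mem hcol hasym hC hyC hxC
          exact hfin _ _ h hxC h1 hσ
        · obtain ⟨h1, h2⟩ := h.rot.mem hcol hasym hC hxC hyC
          exact hfin _ _ h h2 hxC hσ
      · have hσ : ¬ σ := by rwa [hw] at hxS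
        obtain ⟨p, q, r, -, h, hc, -⟩ := hcell c
        rcases hc with rfl | rfl
        · obtain ⟨h1, h2⟩ := h.rot.rot.rot.mem hcol hasym hC hxC hyC
          exact hfin _ _ h hyC h1 hσ
        · obtain ⟨h1, h2⟩ := h.rot.mem hcol hasym hC hyC hxC
          exact hfin _ _ h h2 hyC hσ
      · have hσ : ¬ σ := by rwa [hw] at hxS
        fin_cases c
        · obtain ⟨h1, h2⟩ := hc0.rot.rot.mem hcol hasym hC hyC hxC
          exact hfin _ _ hc0 h1 h2 hσ
        · exact absurd rfl hyx
        · obtain ⟨h1, h2⟩ := hc2.rot.rot.mem hcol hasym hC hyC hxC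
          exact hfin _ _ hc2 h1 h2 hσ
      · have hσ : ¬ σ := by rwa [hw] at hxS
        fin_cases c
        · obtain ⟨h1, h2⟩ := hc0.rot.rot.mem hcol hasym hC hxC hyC
          exact hfin _ _ hc0 h1 h2 hσ
        · exact absurd rfl hyx
        · obtain ⟨h1, h2⟩ := hc2.rot.rot.mem hcol hasym hC hxC hyC
          exact hfin _ _ hc2 h1 h2 hσ
    have hpre : DConvex A (ι ⁻¹' C) :=
      ⟨⟨a, haC⟩, fun u hu v hv k f hf i hi => hC.2 _ hu _ hv k _ (hlift _ _ _ _ hf) i hi⟩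
    have hall : ∀ v, ι v ∈ C := by
      rcases g4 _ hpre ⟨a, haC, b, hbC, hab⟩ with h | h
      · exact absurd (h haC) haS
      · intro v
        have : v ∈ ι ⁻¹' C := by rw [h]; trivial
        exact this
    ext x
    simp only [Set.mem_univ, iff_true]
    rcases hcov x with ⟨v, rfl⟩ | ⟨c, rfl⟩
    · exact hall v
    · obtain ⟨p, q, r, -, h, hc, -⟩ := hcell c
      obtain ⟨h1, h2⟩ := h.mem hcol hasym hC (hall _) (hall _)
      rcases hc with rfl | rfl
      · exact h2
      · exact h1

end Ext

/-! ### Orientations given by Boolean tables -/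

section Tables

/-- arcs of the grid encoded by Boolean tables -/
def garc (h v : ℕ → ℕ → Bool) (i c j d : ℕ) : Prop :=
  (i = j ∧ c + 1 = d ∧ h i c = true) ∨ (i = j ∧ d + 1 = c ∧ h i d = false) ∨
  (c = d ∧ i + 1 = j ∧ v i c = true) ∨ (c = d ∧ j + 1 = i ∧ v j c = false)

/-- the orientation of the grid encoded by Boolean tables -/
def gA (n : ℕ) (h v : ℕ → ℕ → Bool) (x y : Fin n × Fin 3) : Prop :=
  garc h v x.1 x.2 y.1 y.2

theorem gA_orientation (n : ℕ) (h v : ℕ → ℕ → Bool) :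
    IsOrientation (gridGraph n 3) (gA n h v) := by
  refine ⟨?_, ?_, ?_⟩
  · intro x y hxy
    rw [grid_adj]
    unfold gA garc at hxy
    omega
  · intro x y hxy
    rw [grid_adj] at hxy
    unfold gA garc
    generalize (x.1 : ℕ) = i at *
    generalize (x.2 : ℕ) = c at *
    generalize (y.1 : ℕ) = j at *
    generalize (y.2 : ℕ) = d at *
    rcases hxy with ⟨rfl, rfl | rfl⟩ | ⟨rfl, rfl | rfl⟩
    · cases h i c <;> simp
    · cases h i d <;> simp
    · cases v i c <;> simp
    · cases v j c <;> simp
  · intro x y hxy hyx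
    unfold gA garc at hxy hyx
    generalize (x.1 : ℕ) = i at *
    generalize (x.2 : ℕ) = c at *
    generalize (y.1 : ℕ) = j at *
    generalize (y.2 : ℕ) = d at *
    grind

/-- two adjacent directed 4-cycles between rows `i` and `i+1` -/
def cellC (h v : ℕ → ℕ → Bool) (i : ℕ) (b : Bool) : Prop :=
  h i 0 = b ∧ h i 1 = !b ∧ h (i + 1) 0 = !b ∧ h (i + 1) 1 = b ∧
  v i 0 = !b ∧ v i 1 = b ∧ v i 2 = !b

/-- existence of a good orientation with a good set of size `k`, with flags for extendability at
the top and at the bottom -/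
def GB (n k : ℕ) (t b : Bool) : Prop :=
  ∃ (h v : ℕ → ℕ → Bool) (S : Set (Fin n × Fin 3)), Good (gA n h v) S ∧ S.ncard = k ∧
    (t = true → ∃ β, cellC h v 0 β ∧ ∀ x : Fin n × Fin 3, (x.1 : ℕ) = 0 → x ∈ S) ∧
    (b = true → ∃ β, cellC h v (n - 2) β ∧ ∀ x : Fin n × Fin 3, (x.1 : ℕ) + 1 = n → x ∉ S)

theorem GB.spectrum {n k : ℕ} {t b : Bool} (H : GB n k t b) :
    k ∈ strongConvexitySpectrum (gridGraph n 3) := by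
  obtain ⟨h, v, S, hG, rfl, -, -⟩ := H
  exact ⟨gA n h v, gA_orientation n h v, hG.1, hG.convexityNumber⟩

theorem cellC.cells {h v : ℕ → ℕ → Bool} {i : ℕ} {b : Bool} (H : cellC h v i b) {n : ℕ}
    (hi : i + 1 < n) :
    Cell (gA n h v) (⟨i, by omega⟩, 0) (⟨i, by omega⟩, 1) (⟨i + 1, hi⟩, 1) (⟨i + 1, hi⟩, 0) ∧
    Cell (gA n h v) (⟨i, by omega⟩, 2) (⟨i, by omega⟩, 1) (⟨i + 1, hi⟩, 1) (⟨i + 1, hi⟩, 2) := by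
  obtain ⟨h1, h2, h3, h4, h5, h6, h7⟩ := H
  cases b
  · refine ⟨Or.inr ?_, Or.inr ?_⟩ <;> simp_all [gA, garc]
  · refine ⟨Or.inl ?_, Or.inl ?_⟩ <;> simp_all [gA, garc]

theorem fin3_cases (c : Fin 3) : (c : ℕ) = 0 ∨ (c : ℕ) = 1 ∨ (c : ℕ) = 2 := by omega

theorem garc_bot_in {h v : ℕ → ℕ → Bool} {m i c j d : ℕ} (hi : i < m + 2) (hj : j < m + 2)
    (H : garc h v i c j d) :
    garc (fun i c => if i = m + 2 then h m c else h i c)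
      (fun i c => if i = m + 1 then !v m c else v i c) i c j d := by
  have e1 : i ≠ m + 2 := by omega
  have e2 : j ≠ m + 2 := by omega
  unfold garc at *
  simp only [e1, if_false]
  rcases H with H | H | ⟨h1, h2, h3⟩ | ⟨h1, h2, h3⟩
  · exact Or.inl H
  · exact Or.inr (Or.inl H)
  · have e3 : i ≠ m + 1 := by omega
    exact Or.inr (Or.inr (Or.inl ⟨h1, h2, by simp [e3, h3]⟩))
  · have e3 : j ≠ m + 1 := by omega
    exact Or.inr (Or.inr (Or.inr ⟨h1, h2, by simp [e3, h3]⟩))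

theorem garc_bot_out {h v : ℕ → ℕ → Bool} {m i c j d : ℕ} (hi : i < m + 3) (hj : j < m + 3)
    (H : garc (fun i c => if i = m + 2 then h m c else h i c)
      (fun i c => if i = m + 1 then !v m c else v i c) i c j d) :
    garc h v (if i = m + 2 then m else i) c (if j = m + 2 then m else j) d := by
  unfold garc at *
  rcases H with ⟨rfl, h2, h3⟩ | ⟨rfl, h2, h3⟩ | ⟨rfl, rfl, h3⟩ | ⟨rfl, rfl, h3⟩
  · left
    by_cases e : i = m + 2 <;> simp_all
  · right; left
    by_cases e : i = m + 2 <;> simp_all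
  · have e1 : i ≠ m + 2 := by omega
    by_cases e2 : i = m + 1
    · subst e2
      simp_all
    · have e3 : i + 1 ≠ m + 2 := by omega
      simp_all
  · have e1 : j ≠ m + 2 := by omega
    by_cases e2 : j = m + 1
    · subst e2
      simp_all
    · have e3 : j + 1 ≠ m + 2 := by omega
      simp_all

theorem garc_top_in {h v : ℕ → ℕ → Bool} {i c j d : ℕ} (H : garc h v i c j d) :
    garc (fun i c => if i = 0 then h 1 c else h (i - 1) c)
      (fun i c => if i = 0 then !v 0 c else v (i - 1) c) (i + 1) c (j + 1) d := by
  unfold garc at *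
  simpa using H

theorem garc_top_out {h v : ℕ → ℕ → Bool} {i c j d : ℕ}
    (H : garc (fun i c => if i = 0 then h 1 c else h (i - 1) c)
      (fun i c => if i = 0 then !v 0 c else v (i - 1) c) i c j d) :
    garc h v (if i = 0 then 1 else i - 1) c (if j = 0 then 1 else j - 1) d := by
  unfold garc at *
  rcases i with _ | i <;> rcases j with _ | j <;> simp_all
  all_goals
    rcases H with ⟨rfl, rfl, h3⟩
    simp_all

theorem GB.bot {m k : ℕ} {t : Bool} (H : GB (m + 2) k t true) : GB (m + 3) k t true := by
  obtain ⟨h, v, S, hG, hk, ht, hb⟩ := H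
  obtain ⟨β, hβ, hrow⟩ := hb rfl
  simp only [Nat.add_sub_cancel] at hβ
  set h' : ℕ → ℕ → Bool := fun i c => if i = m + 2 then h m c else h i c with hh'
  set v' : ℕ → ℕ → Bool := fun i c => if i = m + 1 then !v m c else v i c with hv'
  let ι : Fin (m + 2) × Fin 3 → Fin (m + 3) × Fin 3 := fun x => (x.1.castSucc, x.2)
  let ρ : Fin (m + 3) × Fin 3 → Fin (m + 2) × Fin 3 := fun x =>
    (⟨if (x.1 : ℕ) = m + 2 then m else x.1, by have := x.1.2; split <;> omega⟩, x.2)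
  let S' : Set (Fin (m + 3) × Fin 3) := ι '' S
  have hιinj : Function.Injective ι := by
    intro x y hxy
    simp only [ι, Prod.mk.injEq, Fin.castSucc_inj] at hxy
    exact Prod.ext hxy.1 hxy.2
  have hcell' : cellC h' v' (m + 1) (!β) := by
    obtain ⟨h1, h2, h3, h4, h5, h6, h7⟩ := hβ
    simp [cellC, hh', hv', *]
  have hO := gA_orientation (m + 3) h' v'
  have hcc := hcell'.cells (n := m + 3) (by omega)
  refine ⟨h', v', S', ?_, ?_, ?_, ?_⟩
  · refine hG.extend hO.col hO.2.2 ι ρ ?_ ?_ ?_ (fun c => (⟨m + 1, by omega⟩, c))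
      (fun c => (⟨m + 2, by omega⟩, c)) ?_ ?_ hcc.1 hcc.2 False ?_ ?_ ?_
    · rintro ⟨⟨i, hi⟩, c⟩
      simp only [ι, ρ, Fin.castSucc_mk, Prod.mk.injEq, Fin.mk.injEq, and_true]
      rw [if_neg (by omega)]
    · rintro ⟨⟨i, hi⟩, c⟩ ⟨⟨j, hj⟩, d⟩ hxy
      exact garc_bot_in hi hj hxy
    · rintro ⟨⟨i, hi⟩, c⟩ ⟨⟨j, hj⟩, d⟩ hxy
      exact garc_bot_out hi hj hxy
    · rintro ⟨⟨i, hi⟩, c⟩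
      by_cases h1 : i = m + 2
      · right
        exact ⟨c, by simp [h1]⟩
      · left
        exact ⟨(⟨i, by omega⟩, c), rfl⟩
    · rintro ⟨⟨i, hi⟩, c⟩ ⟨⟨j, hj⟩, d⟩ hxy
      have hadj := hO.1 _ _ hxy
      rw [grid_adj] at hadj
      simp only at hadj
      by_cases h1 : i = m + 2
      · subst h1
        by_cases h2 : j = m + 2
        · subst h2
          right; right; right
          by_cases h3 : (c : ℕ) = 1
          · refine ⟨d, Or.inr ⟨?_, rfl⟩⟩
            simp [Fin.ext_iff, h3]
          · refine ⟨c, Or.inl ⟨rfl, ?_⟩⟩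
            simp only [Prod.mk.injEq, true_and, Fin.ext_iff, Fin.val_one]
            omega
        · right; right; left
          refine ⟨c, rfl, ?_⟩
          simp only [ι, Fin.castSucc_mk, Prod.mk.injEq, Fin.ext_iff, true_and, and_true]
          omega
      · by_cases h2 : j = m + 2
        · subst h2
          right; left
          refine ⟨c, ?_, ?_⟩
          · simp only [ι, Fin.castSucc_mk, Prod.mk.injEq, Fin.ext_iff, true_and, and_true]
            omega
          · simp only [Prod.mk.injEq, Fin.ext_iff, true_and, and_true]
            omega
        · left
          exact ⟨⟨(⟨i, by omega⟩, c), rfl⟩, ⟨(⟨j, by omega⟩, d), rfl⟩⟩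
    · intro x
      exact hιinj.mem_set_image
    · intro c
      simpa using hrow (⟨m + 1, by omega⟩, c) rfl
    · intro c
      simp only [iff_false]
      rintro ⟨⟨⟨i, hi⟩, d⟩, -, heq⟩
      simp only [ι, Fin.castSucc_mk, Prod.mk.injEq, Fin.mk.injEq] at heq
      omega
  · rw [← hk]
    exact Set.ncard_image_of_injective S hιinj
  · intro h1
    obtain ⟨γ, hγ, hr⟩ := ht h1
    refine ⟨γ, ?_, ?_⟩
    · simpa [cellC, hh', hv'] using hγ
    · rintro ⟨⟨i, hi⟩, c⟩ hx
      exact ⟨(⟨i, by simp only at hx; omega⟩, c), hr _ hx, rfl⟩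
  · intro _
    refine ⟨!β, hcell', ?_⟩
    rintro ⟨⟨j, hj⟩, c⟩ hx ⟨⟨⟨i, hi⟩, d⟩, -, heq⟩
    simp only [ι, Fin.castSucc_mk, Prod.mk.injEq, Fin.mk.injEq] at heq hx
    omega

theorem GB.top {m k : ℕ} {b : Bool} (H : GB (m + 2) k true b) : GB (m + 3) (k + 3) true false := by
  obtain ⟨h, v, S, hG, hk, ht, -⟩ := H
  obtain ⟨β, hβ, hrow⟩ := ht rfl
  set h' : ℕ → ℕ → Bool := fun i c => if i = 0 then h 1 c else h (i - 1) c with hh'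
  set v' : ℕ → ℕ → Bool := fun i c => if i = 0 then !v 0 c else v (i - 1) c with hv'
  let ι : Fin (m + 2) × Fin 3 → Fin (m + 3) × Fin 3 := fun x => (x.1.succ, x.2)
  let ρ : Fin (m + 3) × Fin 3 → Fin (m + 2) × Fin 3 := fun x =>
    (⟨if (x.1 : ℕ) = 0 then 1 else x.1 - 1, by have := x.1.2; split <;> omega⟩, x.2)
  let w : Fin 3 → Fin (m + 3) × Fin 3 := fun c => (⟨0, by omega⟩, c)
  let S' : Set (Fin (m + 3) × Fin 3) := ι '' S ∪ Set.range w
  have hιinj : Function.Injective ι := by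
    intro x y hxy
    simp only [ι, Prod.mk.injEq, Fin.succ_inj] at hxy
    exact Prod.ext hxy.1 hxy.2
  have hwinj : Function.Injective w := by
    intro x y hxy
    simpa [w] using hxy
  have hwι : ∀ x c, w c ≠ ι x := by
    intro x c heq
    simp only [w, ι, Prod.mk.injEq, Fin.ext_iff, Fin.val_succ] at heq
    omega
  have hcell' : cellC h' v' 0 (!β) := by
    obtain ⟨h1, h2, h3, h4, h5, h6, h7⟩ := hβ
    simp only [Nat.zero_add] at h3 h4
    simp [cellC, hh', hv', *]
  have hO := gA_orientation (m + 3) h' v'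
  have hcc := hcell'.cells (n := m + 3) (by omega)
  refine ⟨h', v', S', ?_, ?_, ?_, by simp⟩
  · refine hG.extend hO.col hO.2.2 ι ρ ?_ ?_ ?_ (fun c => (⟨0, by omega⟩, c))
      w ?_ ?_ hcc.1.rot.rot.symm' hcc.2.rot.rot.symm' True ?_ ?_ ?_
    · rintro ⟨⟨i, hi⟩, c⟩
      simp [ι, ρ]
    · rintro ⟨⟨i, hi⟩, c⟩ ⟨⟨j, hj⟩, d⟩ hxy
      exact garc_top_in hxy
    · rintro ⟨⟨i, hi⟩, c⟩ ⟨⟨j, hj⟩, d⟩ hxy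
      exact garc_top_out hxy
    · rintro ⟨⟨i, hi⟩, c⟩
      rcases i with _ | i
      · right
        exact ⟨c, rfl⟩
      · left
        exact ⟨(⟨i, by omega⟩, c), rfl⟩
    · rintro ⟨⟨i, hi⟩, c⟩ ⟨⟨j, hj⟩, d⟩ hxy
      have hadj := hO.1 _ _ hxy
      rw [grid_adj] at hadj
      simp only at hadj
      rcases i with _ | i
      · rcases j with _ | j
        · right; right; right
          by_cases h3 : (c : ℕ) = 1
          · refine ⟨d, Or.inr ⟨?_, rfl⟩⟩
            simp [w, Fin.ext_iff, h3]
          · refine ⟨c, Or.inl ⟨rfl, ?_⟩⟩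
            simp only [w, Prod.mk.injEq, true_and, Fin.ext_iff, Fin.val_one]
            omega
        · right; right; left
          refine ⟨c, rfl, ?_⟩
          simp only [ι, Fin.succ_mk, Prod.mk.injEq, Fin.ext_iff, true_and, and_true]
          omega
      · rcases j with _ | j
        · right; left
          refine ⟨c, ?_, ?_⟩
          · simp only [ι, Fin.succ_mk, Prod.mk.injEq, Fin.ext_iff, true_and, and_true]
            omega
          · simp only [w, Prod.mk.injEq, Fin.ext_iff, true_and, and_true]
            omega
        · left
          exact ⟨⟨(⟨i, by omega⟩, c), rfl⟩, ⟨(⟨j, by omega⟩, d), rfl⟩⟩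
    · intro x
      constructor
      · rintro (h1 | ⟨c, h1⟩)
        · exact hιinj.mem_set_image.1 h1
        · exact absurd h1 (hwι x c)
      · intro h1
        exact Or.inl (hιinj.mem_set_image.2 h1)
    · intro c
      simpa using hrow (⟨0, by omega⟩, c) rfl
    · intro c
      simp only [iff_true]
      exact Or.inr ⟨c, rfl⟩
  · rw [Set.ncard_union_eq]
    · rw [Set.ncard_image_of_injective S hιinj, hk]
      congr 1
      rw [← Set.image_univ, Set.ncard_image_of_injective _ hwinj]
      simp
    · rw [Set.disjoint_left]
      rintro x ⟨y, -, rfl⟩ ⟨c, hc⟩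
      exact hwι y c hc
  · intro _
    refine ⟨!β, hcell', ?_⟩
    rintro ⟨⟨j, hj⟩, c⟩ hx
    simp only at hx
    subst hx
    exact Or.inr ⟨c, rfl⟩

theorem GB.bots {m k : ℕ} {t : Bool} (H : GB (m + 2) k t true) (d : ℕ) :
    GB (m + d + 2) k t true := by
  induction d with
  | zero => exact H
  | succ d ih => exact ih.bot

theorem GB.tops {m k : ℕ} {b : Bool} (H : GB (m + 2) k true b) (j : ℕ) :
    ∃ b', GB (m + j + 2) (k + 3 * j) true b' := by
  induction j with
  | zero => exact ⟨b, H⟩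
  | succ j ih =>
    obtain ⟨b', h⟩ := ih
    exact ⟨false, h.top⟩

end Tables

/-! ### Finite base orientations, verified by a distance table -/

section Dist

variable {A : V → V → Prop} {d : V → V → ℕ}

theorem dist_le (h0 : ∀ u, d u u = 0) (harc : ∀ x y z, A y z → d x z ≤ d x y + 1) {k : ℕ}
    {f : ℕ → V} {u v : V} (hf : IsDirWalk A k f u v) : d u v ≤ k := by
  obtain ⟨f0, fk, fs⟩ := hf
  subst f0 fk
  have : ∀ j, j ≤ k → d (f 0) (f j) ≤ j := by
    intro j
    induction j with
    | zero => intro _; rw [h0]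
    | succ j ih =>
      intro hj
      have h1 := ih (by omega)
      have h2 := harc (f 0) _ _ (fs j (by omega))
      omega
  exact this k le_rfl

theorem dist_walk (h0 : ∀ u, d u u = 0)
    (hpred : ∀ x y, x ≠ y → ∃ z, A z y ∧ d x z + 1 = d x y) (u v : V) :
    ∃ f, IsDirWalk A (d u v) f u v := by
  have : ∀ k v, d u v = k → ∃ f, IsDirWalk A k f u v := by
    intro k
    induction k with
    | zero =>
      intro v hv
      have : u = v := by
        by_contra hne
        obtain ⟨z, -, hz⟩ := hpred u v hne
        omega
      subst this
      exact ⟨_, IsDirWalk.refl u⟩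
    | succ k ih =>
      intro v hv
      have hne : u ≠ v := by
        rintro rfl
        rw [h0] at hv
        omega
      obtain ⟨z, hz, hd⟩ := hpred u v hne
      obtain ⟨f, hf⟩ := ih z (by omega)
      exact ⟨_, hf.append (IsDirWalk.single hz)⟩
  exact this _ v rfl

theorem dist_geodesic (h0 : ∀ u, d u u = 0) (harc : ∀ x y z, A y z → d x z ≤ d x y + 1)
    (hpred : ∀ x y, x ≠ y → ∃ z, A z y ∧ d x z + 1 = d x y) {k : ℕ} {f : ℕ → V} {u v : V}
    (hf : IsGeodesic A k f u v) {i : ℕ} (hi : i ≤ k) : d u (f i) + d (f i) v = d u v := by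
  have h1 := dist_le h0 harc (hf.1.sub (Nat.zero_le i) hi)
  have h2 := dist_le h0 harc (hf.1.sub hi le_rfl)
  rw [hf.1.1] at h1
  rw [hf.1.2.1] at h2
  obtain ⟨g, hg⟩ := dist_walk h0 hpred u v
  have h3 := hf.2 _ _ hg
  obtain ⟨g1, hg1⟩ := dist_walk h0 hpred u (f i)
  obtain ⟨g2, hg2⟩ := dist_walk h0 hpred (f i) v
  have h4 := dist_le h0 harc (hg1.append hg2)
  omega

theorem dist_interval (h0 : ∀ u, d u u = 0) (harc : ∀ x y z, A y z → d x z ≤ d x y + 1)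
    (hpred : ∀ x y, x ≠ y → ∃ z, A z y ∧ d x z + 1 = d x y) {C : Set V} (hC : DConvex A C)
    {u v x : V} (hu : u ∈ C) (hv : v ∈ C) (hx : d u x + d x v = d u v) : x ∈ C := by
  obtain ⟨g1, hg1⟩ := dist_walk h0 hpred u x
  obtain ⟨g2, hg2⟩ := dist_walk h0 hpred x v
  have hg : IsGeodesic A (d u x + d x v) _ u v := ⟨hg1.append hg2, fun k' f' h' => by
    have := dist_le h0 harc h'
    omega⟩
  have := hC.2 u hu v hv _ _ hg (d u x) (by omega)
  simp only [le_refl, if_true] at this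
  rwa [hg1.2.1] at this

end Dist

section Check

/-- look-up of a distance -/
def dtab (D : List (List ℕ)) (a b : ℕ) : ℕ := (D.getD a []).getD b 0

/-- look-up in a Boolean table -/
def btab (T : List (List Bool)) (i c : ℕ) : Bool := (T.getD i []).getD c false

/-- vertex codes -/
def code {n : ℕ} (x : Fin n × Fin 3) : ℕ := 3 * (x.1 : ℕ) + x.2

/-- Boolean version of `garc` on codes -/
def arcB (h v : ℕ → ℕ → Bool) (a b : ℕ) : Bool :=
  (a / 3 == b / 3 && (a % 3 + 1 == b % 3 && h (a / 3) (a % 3))) ||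
  (a / 3 == b / 3 && (b % 3 + 1 == a % 3 && !h (a / 3) (b % 3))) ||
  (a % 3 == b % 3 && (a / 3 + 1 == b / 3 && v (a / 3) (a % 3))) ||
  (a % 3 == b % 3 && (b / 3 + 1 == a / 3 && !v (b / 3) (a % 3)))

/-- check of a hull certificate -/
def hullB (N : ℕ) (d : ℕ → ℕ → ℕ) (g : List (ℕ × ℕ)) : List ℕ → List (ℕ × ℕ × ℕ) → Bool
  | C, [] => (List.range N).all (fun x => C.contains x) ||
      g.any (fun p => C.contains p.1 && C.contains p.2)
  | C, (x, a, b) :: r => C.contains a && (C.contains b && (d a x + d x b == d a b &&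
      (Nat.blt x N && hullB N d g (x :: C) r)))

/-- check of a list of hull certificates -/
def certB (N : ℕ) (d : ℕ → ℕ → ℕ) : List (ℕ × ℕ) → List (ℕ × ℕ × List (ℕ × ℕ × ℕ)) → Bool
  | _, [] => true
  | g, (u, v, st) :: r => hullB N d g [u, v] st && certB N d ((u, v) :: g) r

/-- check of a distance table -/
def distB (N : ℕ) (h v : ℕ → ℕ → Bool) (d : ℕ → ℕ → ℕ) : Bool :=
  (List.range N).all (fun x => d x x == 0) &&
  ((List.range N).all (fun y => (List.range N).all (fun z => !arcB h v y z ||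
    (List.range N).all (fun x => Nat.ble (d x z) (d x y + 1)))) &&
  (List.range N).all (fun x => (List.range N).all (fun y => x == y ||
    (List.range N).any (fun z => d x z + 1 == d x y && arcB h v z y))))

/-- check of convexity -/
def convB (N : ℕ) (d : ℕ → ℕ → ℕ) (s : List ℕ) : Bool :=
  s.all (fun u => s.all (fun w => (List.range N).all (fun x => s.contains x ||
    !(d u x + d x w == d u w))))

/-- the set of a list of codes -/
def codeSet (n : ℕ) (s : List ℕ) : Set (Fin n × Fin 3) := {x | s.contains (code x) = true}

theorem code_lt {n : ℕ} (x : Fin n × Fin 3) : code x < 3 * n := by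
  unfold code
  omega

theorem exists_code {n a : ℕ} (ha : a < 3 * n) : ∃ x : Fin n × Fin 3, code x = a :=
  ⟨(⟨a / 3, by omega⟩, ⟨a % 3, by omega⟩), by simp only [code]; omega⟩

theorem code_inj {n : ℕ} {x y : Fin n × Fin 3} (h : code x = code y) : x = y := by
  obtain ⟨⟨i, hi⟩, ⟨c, hc⟩⟩ := x
  obtain ⟨⟨j, hj⟩, ⟨e, he⟩⟩ := y
  simp only [code] at h
  simp only [Prod.mk.injEq, Fin.mk.injEq]
  omega

theorem arcB_iff {n : ℕ} (h v : ℕ → ℕ → Bool) (x y : Fin n × Fin 3) :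
    arcB h v (code x) (code y) = true ↔ gA n h v x y := by
  have e1 : ∀ x : Fin n × Fin 3, code x / 3 = x.1 := by intro x; unfold code; omega
  have e2 : ∀ x : Fin n × Fin 3, code x % 3 = x.2 := by intro x; unfold code; omega
  unfold arcB gA garc
  rw [e1, e1, e2, e2]
  simp only [Bool.or_eq_true, Bool.and_eq_true, beq_iff_eq, Bool.not_eq_true', or_assoc]

theorem hullB_sound {N : ℕ} {d : ℕ → ℕ → ℕ} {g : List (ℕ × ℕ)} {P : ℕ → Prop}
    (hP : ∀ a b x, P a → P b → x < N → d a x + d x b = d a b → P x)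
    (hg : ∀ p ∈ g, P p.1 → P p.2 → ∀ x < N, P x) (st : List (ℕ × ℕ × ℕ)) :
    ∀ C : List ℕ, (∀ x ∈ C, P x) → hullB N d g C st = true → ∀ x < N, P x := by
  induction st with
  | nil =>
    intro C hC h x hx
    simp only [hullB, Bool.or_eq_true, List.all_eq_true, List.mem_range, List.contains_iff_mem,
      List.any_eq_true, Bool.and_eq_true] at h
    rcases h with h | ⟨p, hp, h1, h2⟩
    · exact hC x (h x hx)
    · exact hg p hp (hC _ h1) (hC _ h2) x hx
  | cons t r ih =>
    obtain ⟨y, a, b⟩ := t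
    intro C hC h
    simp only [hullB, Bool.and_eq_true, List.contains_iff_mem, beq_iff_eq] at h
    obtain ⟨h1, h2, h3, h4, h5⟩ := h
    refine ih (y :: C) ?_ h5
    intro x hx
    rcases List.mem_cons.1 hx with rfl | hx
    · exact hP a b x (hC a h1) (hC b h2) (by simpa [Nat.blt_eq] using h4) h3
    · exact hC x hx

theorem certB_sound {N : ℕ} {d : ℕ → ℕ → ℕ} {P : ℕ → Prop}
    (hP : ∀ a b x, P a → P b → x < N → d a x + d x b = d a b → P x)
    (certs : List (ℕ × ℕ × List (ℕ × ℕ × ℕ))) :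
    ∀ g : List (ℕ × ℕ), (∀ p ∈ g, P p.1 → P p.2 → ∀ x < N, P x) → certB N d g certs = true →
      ∀ q ∈ certs, P q.1 → P q.2.1 → ∀ x < N, P x := by
  induction certs with
  | nil => intro g _ _ q hq; simp at hq
  | cons t r ih =>
    obtain ⟨u, v, st⟩ := t
    intro g hg h
    simp only [certB, Bool.and_eq_true] at h
    obtain ⟨h1, h2⟩ := h
    have huv : P u → P v → ∀ x < N, P x := by
      intro hu hv
      refine hullB_sound hP hg st [u, v] ?_ h1
      intro x hx
      simp only [List.mem_cons, List.not_mem_nil, or_false] at hx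
      rcases hx with rfl | rfl <;> assumption
    intro q hq
    rcases List.mem_cons.1 hq with rfl | hq
    · exact huv
    · refine ih _ ?_ h2 q hq
      intro p hp
      rcases List.mem_cons.1 hp with rfl | hp
      · exact huv
      · exact hg p hp

theorem distB_sound {n : ℕ} {h v : ℕ → ℕ → Bool} {d : ℕ → ℕ → ℕ} (H : distB (3 * n) h v d = true) :
    (∀ u : Fin n × Fin 3, d (code u) (code u) = 0) ∧
    (∀ x y z : Fin n × Fin 3, gA n h v y z →
      d (code x) (code z) ≤ d (code x) (code y) + 1) ∧
    (∀ x y : Fin n × Fin 3, x ≠ y → ∃ z, gA n h v z y ∧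
      d (code x) (code z) + 1 = d (code x) (code y)) := by
  simp only [distB, Bool.and_eq_true, List.all_eq_true, List.mem_range, beq_iff_eq,
    Bool.or_eq_true, Bool.not_eq_true', Nat.ble_eq, List.any_eq_true] at H
  obtain ⟨h1, h2, h3⟩ := H
  refine ⟨fun u => h1 _ (code_lt u), ?_, ?_⟩
  · intro x y z hyz
    rcases h2 _ (code_lt y) _ (code_lt z) with h4 | h4
    · rw [← arcB_iff, h4] at hyz
      exact absurd hyz (by simp)
    · exact h4 _ (code_lt x)
  · intro x y hne
    rcases h3 _ (code_lt x) _ (code_lt y) with h4 | ⟨z, hz, h5, h6⟩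
    · exact absurd (code_inj h4) hne
    · obtain ⟨z', rfl⟩ := exists_code hz
      exact ⟨z', (arcB_iff h v z' y).1 h6, h5⟩

theorem convB_sound {n : ℕ} {h v : ℕ → ℕ → Bool} {d : ℕ → ℕ → ℕ} {s : List ℕ}
    (H : distB (3 * n) h v d = true) (Hc : convB (3 * n) d s = true)
    (hne : (codeSet n s).Nonempty) : DConvex (gA n h v) (codeSet n s) := by
  obtain ⟨d1, d2, d3⟩ := distB_sound H
  refine ⟨hne, ?_⟩
  intro u hu w hw k f hf i hi
  have hgeo := dist_geodesic (d := fun x y => d (code x) (code y)) d1 d2 d3 hf hi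
  simp only [convB, List.all_eq_true, Bool.or_eq_true, List.mem_range, Bool.not_eq_true',
    beq_eq_false_iff_ne] at Hc
  rcases Hc _ (List.contains_iff_mem.1 hu) _ (List.contains_iff_mem.1 hw) _ (code_lt (f i))
    with h1 | h1
  · exact h1
  · exact absurd hgeo h1

theorem cert_univ {n : ℕ} {h v : ℕ → ℕ → Bool} {d : ℕ → ℕ → ℕ}
    {certs : List (ℕ × ℕ × List (ℕ × ℕ × ℕ))}
    (H : distB (3 * n) h v d = true) (Hc : certB (3 * n) d [] certs = true)
    {C : Set (Fin n × Fin 3)} (hC : DConvex (gA n h v) C) {x y : Fin n × Fin 3}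
    (hx : x ∈ C) (hy : y ∈ C)
    (hxy : certs.any (fun q => q.1 == code x && q.2.1 == code y) = true) : C = Set.univ := by
  obtain ⟨d1, d2, d3⟩ := distB_sound H
  simp only [List.any_eq_true, Bool.and_eq_true, beq_iff_eq] at hxy
  obtain ⟨q, hq, h1, h2⟩ := hxy
  have key := certB_sound (N := 3 * n) (d := d) (P := fun a => ∃ z ∈ C, code z = a) ?_ certs []
    (by simp) Hc q hq ⟨x, hx, h1.symm⟩ ⟨y, hy, h2.symm⟩
  · ext z
    simp only [Set.mem_univ, iff_true]
    obtain ⟨z', hz', he⟩ := key _ (code_lt z)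
    rwa [← code_inj he]
  · rintro a b t ⟨a', ha', rfl⟩ ⟨b', hb', rfl⟩ ht hd
    obtain ⟨t', rfl⟩ := exists_code ht
    exact ⟨t', dist_interval (d := fun x y => d (code x) (code y)) d1 d2 d3 hC ha' hb' hd, rfl⟩

theorem distB_strong {n : ℕ} {h v : ℕ → ℕ → Bool} {d : ℕ → ℕ → ℕ}
    (H : distB (3 * n) h v d = true) : StrongConnected (gA n h v) := by
  obtain ⟨d1, d2, d3⟩ := distB_sound H
  intro u w
  obtain ⟨f, hf⟩ := dist_walk (d := fun x y => d (code x) (code y)) d1 d3 u w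
  exact ⟨_, f, hf⟩

/-- every arc not inside `s` has a certificate -/
def coverB (N : ℕ) (h v : ℕ → ℕ → Bool) (s : List ℕ)
    (certs : List (ℕ × ℕ × List (ℕ × ℕ × ℕ))) : Bool :=
  (List.range N).all (fun a => (List.range N).all (fun b => !arcB h v a b ||
    (s.contains a || certs.any (fun q => q.1 == a && q.2.1 == b))))

theorem base_good {n : ℕ} {h v : ℕ → ℕ → Bool} {d : ℕ → ℕ → ℕ} {s : List ℕ}
    {certs : List (ℕ × ℕ × List (ℕ × ℕ × ℕ))}
    (H1 : distB (3 * n) h v d = true) (H2 : convB (3 * n) d s = true)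
    (H3 : certB (3 * n) d [] certs = true) (H4 : coverB (3 * n) h v s certs = true)
    (H5 : (codeSet n s).Nonempty) (H6 : ∃ x, x ∉ codeSet n s) :
    Good (gA n h v) (codeSet n s) := by
  refine ⟨distB_strong H1, convB_sound H1 H2 H5, ?_, ?_⟩
  · intro h
    obtain ⟨x, hx⟩ := H6
    rw [h] at hx
    exact hx trivial
  · intro C hC hnt
    by_cases hsub : C ⊆ codeSet n s
    · exact Or.inl hsub
    right
    obtain ⟨x, hxC, hxS⟩ := Set.not_subset.1 hsub
    obtain ⟨z, hzC, hzx⟩ := hnt.exists_ne x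
    obtain ⟨x', y, hxy, -, hyC, rfl, hyx⟩ := hC.cut (distB_strong H1) (· = x) hxC hzC rfl hzx
    simp only [coverB, List.all_eq_true, List.mem_range, Bool.or_eq_true, Bool.not_eq_true'] at H4
    rcases H4 _ (code_lt x') _ (code_lt y) with h1 | h1 | h1
    · rw [← arcB_iff, h1] at hxy
      exact absurd hxy (by simp)
    · exact absurd h1 hxS
    · exact cert_univ H1 H3 hC hxC hyC h1

theorem ncard_codeSet (n : ℕ) (s : List ℕ) : (codeSet n s).ncard =
    (Finset.univ.filter (fun x : Fin n × Fin 3 => s.contains (code x) = true)).card := by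
  rw [← Set.ncard_coe_finset]
  congr 1
  ext x
  simp [codeSet]

instance (h v : ℕ → ℕ → Bool) (i : ℕ) (b : Bool) : Decidable (cellC h v i b) := by
  unfold cellC
  infer_instance

theorem base {n k : ℕ} {t b : Bool} (H V : List (List Bool)) (D : List (List ℕ)) (s : List ℕ)
    (certs : List (ℕ × ℕ × List (ℕ × ℕ × ℕ)))
    (H1 : distB (3 * n) (btab H) (btab V) (dtab D) = true) (H2 : convB (3 * n) (dtab D) s = true)
    (H3 : certB (3 * n) (dtab D) [] certs = true)
    (H4 : coverB (3 * n) (btab H) (btab V) s certs = true)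
    (H5 : ∃ x : Fin n × Fin 3, s.contains (code x) = true)
    (H6 : ∃ x : Fin n × Fin 3, ¬ s.contains (code x) = true)
    (H7 : (Finset.univ.filter (fun x : Fin n × Fin 3 => s.contains (code x) = true)).card = k)
    (H8 : t = true → ∃ β, cellC (btab H) (btab V) 0 β ∧
      ∀ x : Fin n × Fin 3, (x.1 : ℕ) = 0 → s.contains (code x) = true)
    (H9 : b = true → ∃ β, cellC (btab H) (btab V) (n - 2) β ∧
      ∀ x : Fin n × Fin 3, (x.1 : ℕ) + 1 = n → ¬ s.contains (code x) = true) : GB n k t b :=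
  ⟨btab H, btab V, codeSet n s, base_good H1 H2 H3 H4 H5 H6, by rw [ncard_codeSet, H7], H8, H9⟩

end Check

theorem special (H V : List (List Bool)) (D : List (List ℕ))
    (certs : List (ℕ × ℕ × List (ℕ × ℕ × ℕ)))
    (H1 : distB (3 * 3) (btab H) (btab V) (dtab D) = true)
    (H2 : convB (3 * 3) (dtab D) [0, 1, 3, 4] = true)
    (H3 : certB (3 * 3) (dtab D) [] certs = true)
    (H4 : ∀ x y : Fin 3 × Fin 3, code x < code y →
      (([0, 1, 3, 4].contains (code x) = true ∧ [0, 1, 3, 4].contains (code y) = true) ∨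
      ([4, 5, 7, 8].contains (code x) = true ∧ [4, 5, 7, 8].contains (code y) = true)) ∨
      certs.any (fun q => q.1 == code x && q.2.1 == code y) = true) :
    4 ∈ strongConvexitySpectrum (gridGraph 3 3) := by
  have hc1 : (codeSet 3 [0, 1, 3, 4]).ncard = 4 := by rw [ncard_codeSet]; decide +kernel
  have hc2 : (codeSet 3 [4, 5, 7, 8]).ncard = 4 := by rw [ncard_codeSet]; decide +kernel
  refine ⟨gA 3 (btab H) (btab V), gA_orientation _ _ _, distB_strong H1, convexityNumber_eq
    ⟨codeSet 3 [0, 1, 3, 4], convB_sound H1 H2 ⟨(0, 0), rfl⟩, ?_, hc1⟩ ?_⟩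
  · intro h
    rw [h] at hc1
    simp at hc1
  · intro C hC hne
    have hpair : ∀ x ∈ C, ∀ y ∈ C, x ≠ y →
        (x ∈ codeSet 3 [0, 1, 3, 4] ∧ y ∈ codeSet 3 [0, 1, 3, 4]) ∨
        (x ∈ codeSet 3 [4, 5, 7, 8] ∧ y ∈ codeSet 3 [4, 5, 7, 8]) := by
      intro x hx y hy hxy
      rcases lt_trichotomy (code x) (code y) with h | h | h
      · rcases H4 x y h with h1 | h1
        · exact h1
        · exact absurd (cert_univ H1 H3 hC hx hy h1) hne
      · exact absurd (code_inj h) hxy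
      · rcases H4 y x h with (h1 | h1) | h1
        · exact Or.inl h1.symm
        · exact Or.inr h1.symm
        · exact absurd (cert_univ H1 H3 hC hy hx h1) hne
    have hcov : ∀ z : Fin 3 × Fin 3, z ∉ codeSet 3 [0, 1, 3, 4] → z ∉ codeSet 3 [4, 5, 7, 8] →
        C ⊆ {z} ∨ z ∉ C := by
      intro z h1 h2
      by_cases hz : z ∈ C
      · left
        intro y hy
        by_contra hyz
        have hyz' : z ≠ y := fun h => hyz h.symm
        rcases hpair z hz y hy hyz' with h | h
        · exact h1 h.1
        · exact h2 h.1
      · exact Or.inr hz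
    by_cases s1 : C ⊆ codeSet 3 [0, 1, 3, 4]
    · rw [← hc1]
      exact Set.ncard_le_ncard s1
    by_cases s2 : C ⊆ codeSet 3 [4, 5, 7, 8]
    · rw [← hc2]
      exact Set.ncard_le_ncard s2
    obtain ⟨x, hx, hx1⟩ := Set.not_subset.1 s1
    obtain ⟨y, hy, hy1⟩ := Set.not_subset.1 s2
    by_cases hxy : x = y
    · subst hxy
      rcases hcov x hx1 hy1 with h | h
      · have := Set.ncard_le_ncard h
        rw [Set.ncard_singleton] at this
        omega
      · exact absurd hx h
    · rcases hpair x hx y hy hxy with h | h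
      · exact absurd h.1 hx1
      · exact absurd h.2 hy1

/-! ### The base orientations -/

section Bases

theorem base_31 : GB 3 1 false true :=
  base
    [[true, false], [false, true], [true, false]]
    [[false, true, false], [true, false, true]]
    [[0, 1, 4, 3, 2, 3, 4, 5, 4], [3, 0, 3, 2, 1, 2, 3, 4, 3], [4, 1, 0, 3, 2, 3, 4, 5, 4], [1,
    2, 5, 0, 3, 4, 1, 2, 5], [2, 3, 2, 1, 0, 1, 2, 3, 2], [5, 2, 1, 4, 3, 0, 5, 2, 1], [4, 5, 4,
    3, 2, 3, 0, 1, 4], [3, 4, 3, 2, 1, 2, 3, 0, 3], [4, 5, 4, 3, 2, 3, 4, 1, 0]]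
    [0]
    [(0, 1, [(3, 1, 0), (4, 0, 3), (6, 3, 4), (7, 3, 4), (5, 0, 7), (8, 0, 7), (2, 4, 1)]), (1,
    4, [(0, 4, 1)]), (2, 1, [(4, 1, 2)]), (3, 0, [(1, 0, 3)]), (4, 3, [(0, 3, 4)]), (3, 6, [(4,
    6, 3)]), (4, 5, [(1, 5, 4)]), (5, 2, [(1, 2, 5)]), (5, 8, [(4, 8, 5)]), (6, 7, [(3, 7, 6)]),
    (7, 4, [(3, 4, 7)]), (8, 7, [(4, 7, 8)])]
    (by decide +kernel) (by decide +kernel) (by decide +kernel) (by decide +kernel)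
    (by decide +kernel) (by decide +kernel) (by decide +kernel) (by decide +kernel)
    (by decide +kernel)

theorem base_44 : GB 4 4 false true :=
  base
    [[true, false], [false, false], [true, false], [false, true]]
    [[false, true, false], [true, true, false], [false, true, false]]
    [[0, 1, 8, 3, 2, 7, 4, 3, 6, 5, 4, 5], [3, 0, 7, 2, 1, 6, 3, 2, 5, 4, 3, 4], [4, 1, 0, 3, 2,
    7, 4, 3, 6, 5, 4, 5], [1, 2, 7, 0, 3, 6, 1, 2, 5, 4, 3, 4], [2, 3, 6, 1, 0, 5, 2, 1, 4, 3,
    2, 3], [3, 2, 1, 2, 1, 0, 3, 2, 5, 4, 3, 4], [8, 7, 6, 7, 6, 5, 0, 1, 4, 3, 2, 3], [7, 6, 5,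
    6, 5, 4, 3, 0, 3, 2, 1, 2], [4, 3, 2, 3, 2, 1, 4, 1, 0, 3, 2, 3], [9, 8, 7, 8, 7, 6, 1, 2,
    5, 0, 3, 4], [6, 5, 4, 5, 4, 3, 2, 3, 2, 1, 0, 1], [5, 4, 3, 4, 3, 2, 5, 2, 1, 4, 3, 0]]
    [0, 1, 3, 4]
    [(2, 1, [(4, 1, 2), (5, 1, 2), (7, 2, 5), (8, 2, 5), (10, 2, 5), (11, 2, 5), (0, 4, 1), (3,
    2, 0), (6, 10, 7), (9, 7, 6)]), (5, 2, [(1, 2, 5)]), (3, 6, [(4, 6, 3), (1, 3, 4), (2, 6,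
    1)]), (7, 10, [(6, 10, 7), (8, 10, 7), (3, 8, 6)]), (8, 7, [(10, 7, 8)]), (8, 5, [(7, 5,
    8)]), (5, 4, [(8, 4, 5)]), (4, 7, [(5, 7, 4)]), (10, 9, [(7, 9, 10)]), (9, 6, [(10, 6, 9)]),
    (6, 7, [(9, 7, 6)]), (10, 11, [(7, 11, 10)]), (11, 8, [(7, 8, 11)])]
    (by decide +kernel) (by decide +kernel) (by decide +kernel) (by decide +kernel)
    (by decide +kernel) (by decide +kernel) (by decide +kernel) (by decide +kernel)
    (by decide +kernel)

theorem base_36 : GB 3 6 true false :=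
  base
    [[true, false], [false, true], [false, true]]
    [[false, true, false], [false, true, false]]
    [[0, 1, 4, 3, 2, 3, 4, 3, 4], [3, 0, 3, 2, 1, 2, 3, 2, 3], [4, 1, 0, 3, 2, 3, 4, 3, 4], [1,
    2, 5, 0, 3, 4, 5, 4, 5], [2, 3, 2, 1, 0, 1, 2, 1, 2], [5, 2, 1, 4, 3, 0, 5, 4, 5], [2, 3, 6,
    1, 4, 5, 0, 5, 6], [3, 4, 3, 2, 5, 2, 1, 0, 1], [6, 3, 2, 5, 4, 1, 6, 5, 0]]
    [0, 1, 2, 3, 4, 5]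
    [(4, 7, [(0, 7, 4), (3, 4, 0), (1, 7, 4), (2, 4, 1), (5, 4, 1), (6, 7, 4), (8, 7, 4)]), (7,
    6, [(4, 6, 7)]), (6, 3, [(7, 3, 6)]), (7, 8, [(1, 8, 7), (6, 7, 1)]), (8, 5, [(7, 5, 8)])]
    (by decide +kernel) (by decide +kernel) (by decide +kernel) (by decide +kernel)
    (by decide +kernel) (by decide +kernel) (by decide +kernel) (by decide +kernel)
    (by decide +kernel)

theorem base_46 : GB 4 6 true false :=
  base
    [[true, false], [false, true], [false, true], [false, false]]
    [[false, true, false], [false, true, false], [false, true, true]]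
    [[0, 1, 4, 3, 2, 3, 4, 3, 4, 5, 4, 5], [3, 0, 3, 2, 1, 2, 3, 2, 3, 4, 3, 4], [4, 1, 0, 3, 2,
    3, 4, 3, 4, 5, 4, 5], [1, 2, 5, 0, 3, 4, 5, 4, 5, 6, 5, 6], [2, 3, 2, 1, 0, 1, 2, 1, 2, 3,
    2, 3], [5, 2, 1, 4, 3, 0, 5, 4, 5, 6, 5, 6], [2, 3, 6, 1, 4, 5, 0, 5, 6, 7, 6, 7], [3, 4, 3,
    2, 5, 2, 1, 0, 1, 2, 1, 2], [6, 3, 2, 5, 4, 1, 4, 5, 0, 3, 2, 1], [3, 4, 7, 2, 5, 6, 1, 6,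
    7, 0, 7, 8], [4, 5, 8, 3, 6, 7, 2, 7, 8, 1, 0, 9], [5, 6, 9, 4, 7, 8, 3, 8, 9, 2, 1, 0]]
    [0, 1, 2, 3, 4, 5]
    [(4, 7, [(0, 7, 4), (3, 4, 0), (1, 7, 4), (2, 4, 1), (5, 4, 1), (6, 7, 4), (8, 7, 4), (9, 8,
    0), (10, 4, 9), (11, 8, 0)]), (7, 6, [(4, 6, 7)]), (6, 3, [(7, 3, 6)]), (7, 8, [(1, 8, 7),
    (6, 7, 1)]), (8, 5, [(7, 5, 8)]), (7, 10, [(0, 10, 7), (6, 7, 0)]), (8, 11, [(0, 11, 8), (5,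
    8, 0)]), (9, 6, [(0, 6, 9), (3, 9, 0)]), (10, 9, [(0, 9, 10), (6, 10, 0)]), (11, 10, [(0,
    10, 11), (3, 11, 0), (6, 11, 0)])]
    (by decide +kernel) (by decide +kernel) (by decide +kernel) (by decide +kernel)
    (by decide +kernel) (by decide +kernel) (by decide +kernel) (by decide +kernel)
    (by decide +kernel)

theorem base_56 : GB 5 6 true true :=
  base
    [[true, false], [false, true], [false, false], [true, false], [false, true]]
    [[false, true, false], [false, true, false], [true, true, false], [false, true, false]]
    [[0, 1, 4, 3, 2, 3, 4, 3, 8, 5, 4, 7, 6, 5, 6], [3, 0, 3, 2, 1, 2, 3, 2, 7, 4, 3, 6, 5, 4,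
    5], [4, 1, 0, 3, 2, 3, 4, 3, 8, 5, 4, 7, 6, 5, 6], [1, 2, 5, 0, 3, 4, 5, 4, 9, 6, 5, 8, 7,
    6, 7], [2, 3, 2, 1, 0, 1, 2, 1, 6, 3, 2, 5, 4, 3, 4], [5, 2, 1, 4, 3, 0, 5, 4, 9, 6, 5, 8,
    7, 6, 7], [2, 3, 6, 1, 4, 5, 0, 5, 6, 1, 2, 5, 4, 3, 4], [3, 4, 7, 2, 5, 6, 1, 0, 5, 2, 1,
    4, 3, 2, 3], [4, 3, 2, 3, 4, 1, 2, 1, 0, 3, 2, 5, 4, 3, 4], [9, 8, 7, 8, 9, 6, 7, 6, 5, 0,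
    1, 4, 3, 2, 3], [8, 7, 6, 7, 8, 5, 6, 5, 4, 3, 0, 3, 2, 1, 2], [5, 4, 3, 4, 5, 2, 3, 2, 1,
    4, 1, 0, 3, 2, 3], [10, 9, 8, 9, 10, 7, 8, 7, 6, 1, 2, 5, 0, 3, 4], [7, 6, 5, 6, 7, 4, 5, 4,
    3, 2, 3, 2, 1, 0, 1], [6, 5, 4, 5, 6, 3, 4, 3, 2, 5, 2, 1, 4, 3, 0]]
    [0, 1, 2, 3, 4, 5]
    [(4, 7, [(0, 7, 4), (3, 4, 0), (1, 7, 4), (2, 4, 1), (5, 4, 1), (6, 7, 4), (8, 7, 2), (10,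
    4, 8), (11, 4, 8), (13, 4, 8), (14, 4, 8), (9, 6, 8), (12, 10, 9)]), (7, 6, [(4, 6, 7)]),
    (6, 3, [(7, 3, 6)]), (6, 9, [(7, 9, 6)]), (8, 5, [(4, 5, 8), (7, 5, 8)]), (10, 13, [(9, 13,
    10), (11, 13, 10), (6, 11, 9)]), (11, 10, [(13, 10, 11)]), (11, 8, [(10, 8, 11)]), (8, 7,
    [(11, 7, 8)]), (7, 10, [(8, 10, 7)]), (13, 12, [(10, 12, 13)]), (12, 9, [(13, 9, 12)]), (9,
    10, [(12, 10, 9)]), (13, 14, [(10, 14, 13)]), (14, 11, [(10, 11, 14)])]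
    (by decide +kernel) (by decide +kernel) (by decide +kernel) (by decide +kernel)
    (by decide +kernel) (by decide +kernel) (by decide +kernel) (by decide +kernel)
    (by decide +kernel)

theorem base_48 : GB 4 8 true false :=
  base
    [[true, false], [false, true], [true, false], [true, true]]
    [[false, true, false], [true, false, false], [true, false, false]]
    [[0, 1, 4, 3, 2, 3, 4, 5, 8, 5, 6, 7], [3, 0, 3, 2, 1, 2, 3, 4, 7, 4, 5, 6], [4, 1, 0, 3, 2,
    3, 4, 5, 8, 5, 6, 7], [1, 2, 5, 0, 3, 4, 1, 2, 5, 2, 3, 4], [2, 3, 2, 1, 0, 1, 2, 3, 6, 3,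
    4, 5], [5, 2, 1, 4, 3, 0, 5, 6, 9, 6, 7, 8], [4, 5, 4, 3, 2, 3, 0, 1, 4, 1, 2, 3], [3, 4, 3,
    2, 1, 2, 3, 0, 7, 4, 5, 6], [4, 3, 2, 3, 2, 1, 4, 1, 0, 5, 6, 7], [5, 6, 5, 4, 3, 4, 5, 2,
    3, 0, 1, 2], [4, 5, 4, 3, 2, 3, 4, 1, 2, 5, 0, 1], [5, 4, 3, 4, 3, 2, 5, 2, 1, 6, 7, 0]]
    [0, 1, 2, 3, 4, 5, 6, 7]
    [(6, 9, [(3, 9, 6), (4, 6, 3), (7, 6, 3), (10, 9, 6), (0, 3, 4), (1, 3, 4), (2, 6, 1), (5,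
    6, 1), (8, 9, 1), (11, 6, 8)]), (9, 10, [(6, 10, 9)]), (10, 7, [(9, 7, 10)]), (8, 5, [(6, 5,
    8), (9, 5, 8)]), (8, 7, [(6, 7, 8), (9, 7, 8)]), (10, 11, [(3, 11, 10), (7, 10, 3)]), (11,
    8, [(3, 8, 11), (7, 11, 3)])]
    (by decide +kernel) (by decide +kernel) (by decide +kernel) (by decide +kernel)
    (by decide +kernel) (by decide +kernel) (by decide +kernel) (by decide +kernel)
    (by decide +kernel)

theorem base_58 : GB 5 8 true true :=
  base
    [[true, false], [false, true], [true, true], [true, false], [false, true]]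
    [[false, true, false], [true, false, true], [false, true, true], [false, true, false]]
    [[0, 1, 4, 3, 2, 3, 4, 5, 4, 9, 6, 5, 8, 7, 8], [3, 0, 3, 2, 1, 2, 3, 4, 3, 8, 5, 4, 7, 6,
    7], [4, 1, 0, 3, 2, 3, 4, 5, 4, 9, 6, 5, 8, 7, 8], [1, 2, 5, 0, 3, 4, 1, 2, 3, 6, 3, 4, 5,
    4, 5], [2, 3, 2, 1, 0, 1, 2, 3, 2, 7, 4, 3, 6, 5, 6], [5, 2, 1, 4, 3, 0, 5, 6, 1, 6, 3, 2,
    5, 4, 5], [4, 5, 4, 3, 2, 3, 0, 1, 2, 5, 2, 3, 4, 3, 4], [3, 4, 3, 2, 1, 2, 3, 0, 1, 4, 1,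
    2, 3, 2, 3], [10, 11, 10, 9, 8, 9, 6, 7, 0, 5, 2, 1, 4, 3, 4], [5, 6, 5, 4, 3, 4, 1, 2, 3,
    0, 1, 4, 3, 2, 3], [8, 9, 8, 7, 6, 7, 4, 5, 6, 3, 0, 3, 2, 1, 2], [9, 10, 9, 8, 7, 8, 5, 6,
    7, 4, 1, 0, 3, 2, 3], [6, 7, 6, 5, 4, 5, 2, 3, 4, 1, 2, 5, 0, 3, 4], [7, 8, 7, 6, 5, 6, 3,
    4, 5, 2, 3, 2, 1, 0, 1], [10, 11, 10, 9, 8, 9, 6, 7, 8, 5, 2, 1, 4, 3, 0]]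
    [0, 1, 2, 3, 4, 5, 6, 7]
    [(5, 8, [(4, 8, 5), (1, 5, 4), (2, 5, 4), (6, 8, 5), (3, 5, 6), (7, 8, 5), (9, 8, 5), (10,
    5, 9), (11, 5, 9), (12, 5, 9), (13, 5, 9), (0, 8, 1), (14, 9, 11)]), (7, 8, [(6, 8, 7), (3,
    7, 6), (4, 7, 6), (1, 3, 4), (5, 7, 1)]), (8, 11, [(7, 11, 8)]), (7, 10, [(6, 10, 7), (4, 7,
    6), (8, 4, 10)]), (9, 6, [(7, 6, 9), (10, 6, 9)]), (10, 13, [(9, 13, 10), (11, 13, 10), (6,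
    9, 11)]), (11, 10, [(13, 10, 11)]), (13, 12, [(10, 12, 13)]), (12, 9, [(13, 9, 12)]), (9,
    10, [(12, 10, 9)]), (13, 14, [(10, 14, 13)]), (14, 11, [(10, 11, 14)])]
    (by decide +kernel) (by decide +kernel) (by decide +kernel) (by decide +kernel)
    (by decide +kernel) (by decide +kernel) (by decide +kernel) (by decide +kernel)
    (by decide +kernel)

theorem base_510 : GB 5 10 true false :=
  base
    [[true, false], [false, true], [true, false], [true, false], [true, true]]
    [[false, true, false], [true, false, false], [true, false, false], [true, false, false]]
    [[0, 1, 4, 3, 2, 3, 4, 5, 10, 5, 6, 9, 6, 7, 8], [3, 0, 3, 2, 1, 2, 3, 4, 9, 4, 5, 8, 5, 6,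
    7], [4, 1, 0, 3, 2, 3, 4, 5, 10, 5, 6, 9, 6, 7, 8], [1, 2, 5, 0, 3, 4, 1, 2, 7, 2, 3, 6, 3,
    4, 5], [2, 3, 2, 1, 0, 1, 2, 3, 8, 3, 4, 7, 4, 5, 6], [5, 2, 1, 4, 3, 0, 5, 6, 11, 6, 7, 10,
    7, 8, 9], [4, 5, 4, 3, 2, 3, 0, 1, 6, 1, 2, 5, 2, 3, 4], [3, 4, 3, 2, 1, 2, 3, 0, 9, 4, 5,
    8, 5, 6, 7], [4, 3, 2, 3, 2, 1, 4, 1, 0, 5, 6, 9, 6, 7, 8], [5, 6, 5, 4, 3, 4, 5, 2, 5, 0,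
    1, 4, 1, 2, 3], [4, 5, 4, 3, 2, 3, 4, 1, 10, 5, 0, 9, 6, 7, 8], [5, 4, 3, 4, 3, 2, 5, 2, 1,
    6, 1, 0, 7, 8, 9], [6, 7, 6, 5, 4, 5, 6, 3, 4, 7, 2, 3, 0, 1, 2], [5, 6, 5, 4, 3, 4, 5, 2,
    3, 6, 1, 2, 7, 0, 1], [6, 5, 4, 5, 4, 3, 6, 3, 2, 7, 2, 1, 8, 9, 0]]
    [0, 1, 2, 3, 4, 5, 6, 7, 9, 10]
    [(8, 5, [(1, 5, 8), (2, 8, 1), (3, 5, 8), (4, 8, 3), (7, 8, 3), (6, 5, 8), (9, 5, 8), (11,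
    5, 8), (12, 8, 11), (13, 8, 11), (14, 8, 11), (0, 3, 5), (10, 9, 5)]), (8, 7, [(3, 7, 8),
    (4, 8, 3), (1, 3, 4), (5, 8, 1)]), (11, 8, [(3, 8, 11), (7, 11, 3)]), (11, 10, [(3, 10, 11),
    (8, 11, 3)]), (14, 11, [(3, 11, 14), (8, 14, 3)]), (13, 14, [(3, 14, 13), (7, 13, 3), (8,
    14, 13)]), (9, 12, [(3, 12, 9), (4, 9, 3), (1, 3, 4), (5, 9, 1), (8, 12, 1)]), (12, 13, [(9,
    13, 12)]), (13, 10, [(12, 10, 13)])]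
    (by decide +kernel) (by decide +kernel) (by decide +kernel) (by decide +kernel)
    (by decide +kernel) (by decide +kernel) (by decide +kernel) (by decide +kernel)
    (by decide +kernel)

theorem base_610 : GB 6 10 true true :=
  base
    [[true, false], [false, true], [true, false], [false, false], [true, false], [false, true]]
    [[false, true, false], [true, false, false], [false, true, false], [true, true, false],
    [false, true, false]]
    [[0, 1, 4, 3, 2, 3, 4, 5, 12, 7, 6, 11, 8, 7, 10, 9, 8, 9], [3, 0, 3, 2, 1, 2, 3, 4, 11, 6,
    5, 10, 7, 6, 9, 8, 7, 8], [4, 1, 0, 3, 2, 3, 4, 5, 12, 7, 6, 11, 8, 7, 10, 9, 8, 9], [1, 2,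
    5, 0, 3, 4, 1, 2, 9, 4, 3, 8, 5, 4, 7, 6, 5, 6], [2, 3, 2, 1, 0, 1, 2, 3, 10, 5, 4, 9, 6, 5,
    8, 7, 6, 7], [5, 2, 1, 4, 3, 0, 5, 6, 13, 8, 7, 12, 9, 8, 11, 10, 9, 10], [4, 5, 4, 3, 2, 3,
    0, 1, 8, 3, 2, 7, 4, 3, 6, 5, 4, 5], [3, 4, 3, 2, 1, 2, 3, 0, 7, 2, 1, 6, 3, 2, 5, 4, 3, 4],
    [4, 3, 2, 3, 2, 1, 4, 1, 0, 3, 2, 7, 4, 3, 6, 5, 4, 5], [5, 6, 5, 4, 3, 4, 1, 2, 7, 0, 3, 6,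
    1, 2, 5, 4, 3, 4], [6, 7, 6, 5, 4, 5, 2, 3, 6, 1, 0, 5, 2, 1, 4, 3, 2, 3], [5, 4, 3, 4, 3,
    2, 3, 2, 1, 2, 1, 0, 3, 2, 5, 4, 3, 4], [10, 9, 8, 9, 8, 7, 8, 7, 6, 7, 6, 5, 0, 1, 4, 3, 2,
    3], [9, 8, 7, 8, 7, 6, 7, 6, 5, 6, 5, 4, 3, 0, 3, 2, 1, 2], [6, 5, 4, 5, 4, 3, 4, 3, 2, 3,
    2, 1, 4, 1, 0, 3, 2, 3], [11, 10, 9, 10, 9, 8, 9, 8, 7, 8, 7, 6, 1, 2, 5, 0, 3, 4], [8, 7,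
    6, 7, 6, 5, 6, 5, 4, 5, 4, 3, 2, 3, 2, 1, 0, 1], [7, 6, 5, 6, 5, 4, 5, 4, 3, 4, 3, 2, 5, 2,
    1, 4, 3, 0]]
    [0, 1, 2, 3, 4, 5, 6, 7, 9, 10]
    [(8, 5, [(1, 5, 8), (2, 8, 1), (3, 5, 8), (4, 8, 3), (7, 8, 3), (6, 5, 8), (9, 8, 6), (10,
    8, 6), (11, 5, 8), (13, 8, 11), (14, 8, 11), (16, 8, 11), (17, 8, 11), (0, 3, 5), (12, 9,
    8), (15, 13, 12)]), (8, 7, [(10, 7, 8), (6, 10, 7), (3, 8, 6), (4, 8, 6), (1, 3, 4), (5, 8,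
    1)]), (11, 8, [(7, 8, 11)]), (9, 12, [(10, 12, 9), (7, 9, 10), (8, 12, 7)]), (13, 16, [(12,
    16, 13), (14, 16, 13), (9, 14, 12)]), (14, 13, [(16, 13, 14)]), (14, 11, [(13, 11, 14)]),
    (11, 10, [(14, 10, 11)]), (10, 13, [(11, 13, 10)]), (16, 15, [(13, 15, 16)]), (15, 12, [(16,
    12, 15)]), (12, 13, [(15, 13, 12)]), (16, 17, [(13, 17, 16)]), (17, 14, [(13, 14, 17)])]
    (by decide +kernel) (by decide +kernel) (by decide +kernel) (by decide +kernel)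
    (by decide +kernel) (by decide +kernel) (by decide +kernel) (by decide +kernel)
    (by decide +kernel)

theorem special_34 : 4 ∈ strongConvexitySpectrum (gridGraph 3 3) :=
  special
    [[true, true], [false, true], [false, false]]
    [[false, true, true], [false, false, true]]
    [[0, 1, 2, 3, 2, 3, 6, 5, 4], [3, 0, 1, 2, 1, 2, 5, 4, 3], [6, 7, 0, 5, 4, 1, 4, 3, 2], [1,
    2, 3, 0, 3, 4, 7, 6, 5], [2, 3, 4, 1, 0, 1, 4, 3, 2], [5, 6, 7, 4, 3, 0, 3, 2, 1], [2, 3, 4,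
    1, 4, 5, 0, 7, 6], [3, 4, 5, 2, 1, 2, 1, 0, 3], [4, 5, 6, 3, 2, 3, 2, 1, 0]]
    [(0, 2, [(1, 0, 2), (3, 2, 0), (4, 0, 3), (5, 2, 0), (6, 2, 0), (7, 0, 6), (8, 0, 6)]), (0,
    5, [(2, 0, 5)]), (0, 6, [(2, 0, 6)]), (0, 7, [(2, 0, 7)]), (0, 8, [(2, 0, 8)]), (1, 2, [(0,
    2, 1)]), (1, 5, [(2, 1, 5)]), (1, 6, [(2, 1, 6)]), (1, 7, [(2, 1, 7)]), (1, 8, [(2, 1, 8)]),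
    (2, 3, [(0, 3, 2)]), (2, 4, [(0, 4, 2)]), (2, 5, [(0, 5, 2)]), (2, 6, [(5, 2, 6)]), (2, 7,
    [(5, 2, 7)]), (2, 8, [(5, 2, 8)]), (3, 5, [(0, 3, 5)]), (3, 6, [(0, 3, 6)]), (3, 7, [(0, 3,
    7)]), (3, 8, [(0, 3, 8)]), (4, 6, [(0, 6, 4)]), (5, 6, [(0, 6, 5)]), (6, 7, [(0, 6, 7)]),
    (6, 8, [(0, 6, 8)])]
    (by decide +kernel) (by decide +kernel) (by decide +kernel) (by decide +kernel)

end Bases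

/-! ### Assembly -/

theorem GB.mk_spectrum {m k : ℕ} {b : Bool} (H : GB (m + 2) k true b) (j n k' : ℕ)
    (hn : n = m + j + 2) (hk : k' = k + 3 * j) :
    k' ∈ strongConvexitySpectrum (gridGraph n 3) := by
  subst hn hk
  obtain ⟨b', h⟩ := H.tops j
  exact h.spectrum

theorem sufficiency {n k : ℕ} (hn : 3 ≤ n) (h1 : 1 ≤ k) (h2 : k ≤ 3 * n - 3) (n2 : k ≠ 2)
    (n3 : k ≠ 3) (n5 : k ≠ 5) (n7 : k ≠ 7) : k ∈ strongConvexitySpectrum (gridGraph n 3) := by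
  by_cases k1 : k = 1
  · subst k1
    have := (GB.bots (m := 1) base_31 (n - 3)).spectrum
    rwa [show 1 + (n - 3) + 2 = n by omega] at this
  by_cases k4 : k = 4
  · subst k4
    by_cases hn3 : n = 3
    · subst hn3
      exact special_34
    · have := (GB.bots (m := 2) base_44 (n - 4)).spectrum
      rwa [show 2 + (n - 4) + 2 = n by omega] at this
  have hk6 : 6 ≤ k := by omega
  have h3 : k % 3 = 0 ∨ k % 3 = 1 ∨ k % 3 = 2 := by omega
  rcases h3 with h3 | h3 | h3
  · obtain ⟨j, hj⟩ : ∃ j, k = 6 + 3 * j := ⟨(k - 6) / 3, by omega⟩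
    obtain ⟨e, he⟩ : ∃ e, n = 3 + j + e := ⟨n - 3 - j, by omega⟩
    rcases e with _ | _ | e
    · exact GB.mk_spectrum (m := 1) base_36 j n k (by omega) hj
    · exact GB.mk_spectrum (m := 2) base_46 j n k (by omega) hj
    · exact GB.mk_spectrum (GB.bots (m := 3) base_56 e) j n k (by omega) hj
  · obtain ⟨j, hj⟩ : ∃ j, k = 10 + 3 * j := ⟨(k - 10) / 3, by omega⟩
    obtain ⟨e, he⟩ : ∃ e, n = 5 + j + e := ⟨n - 5 - j, by omega⟩
    rcases e with _ | e
    · exact GB.mk_spectrum (m := 3) base_510 j n k (by omega) hj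
    · exact GB.mk_spectrum (GB.bots (m := 4) base_610 e) j n k (by omega) hj
  · obtain ⟨j, hj⟩ : ∃ j, k = 8 + 3 * j := ⟨(k - 8) / 3, by omega⟩
    obtain ⟨e, he⟩ : ∃ e, n = 4 + j + e := ⟨n - 4 - j, by omega⟩
    rcases e with _ | e
    · exact GB.mk_spectrum (m := 2) base_48 j n k (by omega) hj
    · exact GB.mk_spectrum (GB.bots (m := 3) base_58 e) j n k (by omega) hj

/-- The strong convexity spectrum of the grid `P_n □ P_3`. -/
theorem strongConvexitySpectrum_grid_n3 (n : ℕ) (hn : 3 ≤ n) :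
    strongConvexitySpectrum (gridGraph n 3) =
      {k : ℕ | 1 ≤ k ∧ k ≤ 3 * n - 3} \ {2, 3, 5, 7} := by
  apply Set.Subset.antisymm
  · intro k hk
    exact necessity hn hk
  · rintro k ⟨⟨h1, h2⟩, h3⟩
    simp only [Set.mem_insert_iff, Set.mem_singleton_iff, not_or] at h3
    exact sufficiency hn h1 h2 h3.1 h3.2.1 h3.2.2.1 h3.2.2.2
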